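/- arXiv:2408.11177 — 2 statements merged into one kernel-verified Lean document; each statement's English description precedes it below -/
import Mathlib

section
/- Assume J̄ < ∞, J_1 > 0, J is of order α ∈ (0,∞], and p ≥ 1 + 4α′/d, so that ν₀ > 0. If ν > ν₀, then I_ν < 0 and there exists q ∈ ℓ²(Z^d) with M[q] = ν and H[q] = I_ν. Conversely, if 0 < ν < ν₀, then I_ν = 0 and there exists no q ∈ ℓ²(Z^d) with M[q] = ν and H[q] = 0. -/
open scoped BigOperators
open Filter Topology

noncomputable section

/-- The `ℓ^∞` norm of a lattice point of `ℤ^d`, as a natural number. -/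
def latNorm {d : ℕ} (m : Fin d → ℤ) : ℕ := Finset.univ.sup fun i => (m i).natAbs

/-- The summand `J_{|m|}` for `m ≠ 0` (and `0` for `m = 0`). -/
def JbarSummand (d : ℕ) (J : ℕ → ℝ) (m : Fin d → ℤ) : ℝ :=
  if m = 0 then 0 else J (latNorm m)

/-- `J̄ = Σ_{m ≠ 0} J_{|m|}`. -/
def Jbar (d : ℕ) (J : ℕ → ℝ) : ℝ := ∑' m : Fin d → ℤ, JbarSummand d J m

/-- The quadratic form `⟨Lu,u⟩ = (1/2) Σ_n Σ_{m ≠ n} J_{|n-m|} |u_n - u_m|²`. -/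
def pairing (d : ℕ) (J : ℕ → ℝ) (u : (Fin d → ℤ) → ℂ) : ℝ :=
  (1/2) * ∑' n : Fin d → ℤ, ∑' m : Fin d → ℤ,
    if m = n then 0 else J (latNorm (n - m)) * ‖u n - u m‖ ^ 2

/-- The mass `M[u] = Σ_n |u_n|²`. -/
def mass (d : ℕ) (u : (Fin d → ℤ) → ℂ) : ℝ := ∑' n : Fin d → ℤ, ‖u n‖ ^ 2

/-- Membership in `ℓ²(ℤ^d)`. -/
def MemL2 (d : ℕ) (u : (Fin d → ℤ) → ℂ) : Prop := Summable fun n : Fin d → ℤ => ‖u n‖ ^ 2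

/-- The potential term `Σ_n |u_n|^{p+1}`. -/
def ppot (d : ℕ) (p : ℝ) (u : (Fin d → ℤ) → ℂ) : ℝ := ∑' n : Fin d → ℤ, ‖u n‖ ^ (p + 1)

/-- The energy `H[u] = (1/2)⟨Lu,u⟩ - (1/(p+1)) Σ_n |u_n|^{p+1}`. -/
def energy (d : ℕ) (J : ℕ → ℝ) (p : ℝ) (u : (Fin d → ℤ) → ℂ) : ℝ :=
  (1/2) * pairing d J u - (1/(p+1)) * ppot d p u

/-- `I_ν = inf {H[q] : q ∈ ℓ², M[q] = ν}`. -/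
def Ifun (d : ℕ) (J : ℕ → ℝ) (p : ℝ) (ν : ℝ) : ℝ :=
  sInf {x : ℝ | ∃ q, MemL2 d q ∧ mass d q = ν ∧ energy d J p q = x}

open scoped ENNReal
/-- `J` is of order `α ∈ (0,∞]`: for finite `α`, `k^{d+α} J_k` tends to a finite positive
limit; for `α = ∞`, `k^{d+β} J_k → 0` for every `β > 0`. -/
def JOrder (d : ℕ) (J : ℕ → ℝ) (α : ℝ≥0∞) : Prop :=
  if α = ⊤ then
    ∀ β : ℝ, 0 < β → Tendsto (fun k : ℕ => (k : ℝ) ^ ((d : ℝ) + β) * J k) atTop (𝓝 0)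
  else
    ∃ A : ℝ, 0 < A ∧ Tendsto (fun k : ℕ => (k : ℝ) ^ ((d : ℝ) + α.toReal) * J k) atTop (𝓝 A)

/-- `α′ = α/2` for `α ∈ (0,2)` and `α′ = 1` for `α ∈ [2,∞]`. -/
def alphaPrime (α : ℝ≥0∞) : ℝ := if α < 2 then α.toReal / 2 else 1

/-- The Gagliardo–Nirenberg-type inequality at mass level `ν`:
`Σ_n |q_n|^{p+1} ≤ ((p+1)/2) ν^{-(p-1)/2} M[q]^{(p-1)/2} ⟨Lq,q⟩` for all `q ∈ ℓ²`. -/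
def GNineq (d : ℕ) (J : ℕ → ℝ) (p ν : ℝ) : Prop :=
  ∀ q : (Fin d → ℤ) → ℂ, MemL2 d q →
    ppot d p q ≤ ((p + 1) / 2) * ν ^ (-(p - 1) / 2) * (mass d q) ^ ((p - 1) / 2) *
      pairing d J q

/-- The excitation threshold `ν₀ = sup {ν > 0 : GN inequality holds at level ν}`,
with `ν₀ = 0` if no such `ν` exists. -/
def nuZero (d : ℕ) (J : ℕ → ℝ) (p : ℝ) : ℝ :=
  sSup (insert 0 {ν : ℝ | 0 < ν ∧ GNineq d J p ν})


lemma cross_tendsto {ι : Type*} (q : ι → ℂ) (r : ℕ → ι → ℂ) (B : ℝ)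
    (hq : Summable fun i => ‖q i‖ ^ 2) (hr : ∀ k, Summable fun i => ‖r k i‖ ^ 2)
    (hB : ∀ k, ∑' i, ‖r k i‖ ^ 2 ≤ B) (h0 : ∀ i, Tendsto (fun k => r k i) atTop (𝓝 0)) :
    Tendsto (fun k => ∑' i, ‖r k i‖ * ‖q i‖) atTop (𝓝 0) := by
  have hB0 : 0 ≤ B := le_trans (tsum_nonneg fun i => by positivity) (hB 0)
  rw [Metric.tendsto_atTop']
  intro ε hε
  set η : ℝ := ε / (2 * (B + 1)) with hη
  have hηpos : 0 < η := by positivity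
  have hηB : η * B < ε / 2 := by
    rw [hη, div_mul_eq_mul_div, div_lt_div_iff₀ (by positivity) (by positivity)]
    nlinarith
  let g : ℕ → ι → ℝ := fun k i => max (‖r k i‖ * ‖q i‖ - η * ‖r k i‖ ^ 2) 0
  have hgb : ∀ k i, ‖g k i‖ ≤ ‖q i‖ ^ 2 / (4 * η) := by
    intro k i
    rw [Real.norm_of_nonneg (le_max_right _ _)]
    apply max_le _ (by positivity)
    rw [le_div_iff₀ (by positivity)]
    nlinarith [sq_nonneg (‖q i‖ - 2 * η * ‖r k i‖)]
  have hs : Summable fun i => ‖q i‖ ^ 2 / (4 * η) := hq.div_const _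
  have hgs : ∀ k, Summable (g k) := fun k => Summable.of_norm_bounded hs (hgb k)
  have hg0 : Tendsto (fun k => ∑' i, g k i) atTop (𝓝 (∑' i : ι, (0:ℝ))) := by
    refine tendsto_tsum_of_dominated_convergence hs ?_ (Eventually.of_forall hgb)
    intro i
    have h1 : Tendsto (fun k => ‖r k i‖) atTop (𝓝 0) := by simpa using (h0 i).norm
    have h2 := ((h1.mul_const ‖q i‖).sub ((h1.pow 2).const_mul η)).max
      (tendsto_const_nhds (x := (0:ℝ)))
    simpa using h2
  rw [tsum_zero, Metric.tendsto_atTop'] at hg0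
  obtain ⟨N, hN⟩ := hg0 (ε / 2) (by positivity)
  refine ⟨N, fun k hk => ?_⟩
  have h1 := hN k hk
  rw [Real.dist_eq, sub_zero] at h1 ⊢
  have h2 := lt_of_abs_lt h1
  rw [abs_of_nonneg (tsum_nonneg fun i => by positivity)]
  have hle : ∀ i, ‖r k i‖ * ‖q i‖ ≤ η * ‖r k i‖ ^ 2 + g k i := fun i => by
    have := le_max_left (‖r k i‖ * ‖q i‖ - η * ‖r k i‖ ^ 2) 0
    simp only [g]; linarith
  have hs2 : Summable fun i => η * ‖r k i‖ ^ 2 + g k i := ((hr k).mul_left η).add (hgs k)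
  have hs1 : Summable fun i => ‖r k i‖ * ‖q i‖ :=
    Summable.of_nonneg_of_le (fun i => by positivity) hle hs2
  have h3 := hs1.tsum_le_tsum hle hs2
  rw [((hr k).mul_left η).tsum_add (hgs k), tsum_mul_left] at h3
  have := mul_le_mul_of_nonneg_left (hB k) hηpos.le
  linarith

lemma cross_summable {ι : Type*} {q r : ι → ℂ}
    (hq : Summable fun i => ‖q i‖ ^ 2) (hr : Summable fun i => ‖r i‖ ^ 2) :
    Summable fun i => ‖r i‖ * ‖q i‖ :=
  Summable.of_nonneg_of_le (fun i => by positivity)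
    (fun i => by nlinarith [sq_nonneg (‖r i‖ - ‖q i‖), sq_nonneg ‖r i‖, sq_nonneg ‖q i‖])
    (hr.add hq)

lemma norm_sub_sq_le (a b : ℂ) : ‖a - b‖ ^ 2 ≤ 2 * (‖a‖ ^ 2 + ‖b‖ ^ 2) := by
  have := norm_sub_le a b
  nlinarith [sq_nonneg (‖a‖ - ‖b‖), norm_nonneg (a - b), norm_nonneg a, norm_nonneg b]

lemma sub_summable {ι : Type*} {q u : ι → ℂ}
    (hq : Summable fun i => ‖q i‖ ^ 2) (hu : Summable fun i => ‖u i‖ ^ 2) :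
    Summable fun i => ‖u i - q i‖ ^ 2 :=
  Summable.of_nonneg_of_le (fun i => by positivity)
    (fun i => norm_sub_sq_le _ _) ((hu.add hq).mul_left 2)

/-- General Brezis--Lieb type splitting. -/
lemma split_tendsto {ι : Type*} (f : ℂ → ℝ) (C : ℝ) (q : ι → ℂ) (u : ℕ → ι → ℂ) (B : ℝ)
    (hq : Summable fun i => ‖q i‖ ^ 2) (hu : ∀ k, Summable fun i => ‖u k i‖ ^ 2)
    (hB : ∀ k, ∑' i, ‖u k i‖ ^ 2 ≤ B) (h0 : ∀ i, Tendsto (fun k => u k i) atTop (𝓝 (q i)))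
    (hfu : ∀ k, Summable fun i => f (u k i)) (hfr : ∀ k, Summable fun i => f (u k i - q i))
    (hfq : Summable fun i => f (q i))
    (hf : ∀ k i, |f (u k i) - f (u k i - q i) - f (q i)| ≤ C * (‖u k i - q i‖ * ‖q i‖)) :
    Tendsto (fun k => ∑' i, f (u k i) - ∑' i, f (u k i - q i)) atTop (𝓝 (∑' i, f (q i))) := by
  have hr := fun k => sub_summable hq (hu k)
  have hc := cross_tendsto q (fun k i => u k i - q i) (2 * (B + ∑' i, ‖q i‖ ^ 2)) hq hr
    (by
      intro k
      have h := (hr k).tsum_le_tsum (fun i => norm_sub_sq_le (u k i) (q i))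
        (((hu k).add hq).mul_left 2)
      rw [tsum_mul_left, (hu k).tsum_add hq] at h
      linarith [hB k])
    (fun i => by simpa using (h0 i).sub_const (q i))
  have hc2 := hc.const_mul C
  rw [mul_zero] at hc2
  have : Tendsto (fun k => ∑' i, (f (u k i) - f (u k i - q i) - f (q i))) atTop (𝓝 0) := by
    refine squeeze_zero_norm (fun k => ?_) hc2
    rw [← tsum_mul_left]
    exact tsum_of_norm_bounded (((cross_summable hq (hr k)).mul_left C).hasSum) (hf k)
  have h2 := this.add_const (∑' i, f (q i))
  rw [zero_add] at h2
  refine h2.congr fun k => ?_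
  rw [((hfu k).sub (hfr k)).tsum_sub hfq, (hfu k).tsum_sub (hfr k)]
  ring

lemma split_sq {ι : Type*} (q : ι → ℂ) (u : ℕ → ι → ℂ) (B : ℝ)
    (hq : Summable fun i => ‖q i‖ ^ 2) (hu : ∀ k, Summable fun i => ‖u k i‖ ^ 2)
    (hB : ∀ k, ∑' i, ‖u k i‖ ^ 2 ≤ B) (h0 : ∀ i, Tendsto (fun k => u k i) atTop (𝓝 (q i))) :
    Tendsto (fun k => ∑' i, ‖u k i‖ ^ 2 - ∑' i, ‖u k i - q i‖ ^ 2) atTop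
      (𝓝 (∑' i, ‖q i‖ ^ 2)) := by
  refine split_tendsto (fun z => ‖z‖ ^ 2) 2 q u B hq hu hB h0 hu
    (fun k => sub_summable hq (hu k)) hq ?_
  intro k i
  have key : ∀ x y : ℂ, |‖x + y‖ ^ 2 - ‖x‖ ^ 2 - ‖y‖ ^ 2| ≤ 2 * (‖x‖ * ‖y‖) := by
    intro x y
    have h1 := norm_add_le x y
    have h2 := abs_norm_sub_norm_le x (-y)
    rw [sub_neg_eq_add, norm_neg] at h2
    have h3 := sq_le_sq' (by linarith [abs_nonneg (‖x‖ - ‖y‖), norm_nonneg (x+y)]) h2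
    rw [sq_abs] at h3
    rw [abs_le]
    constructor <;> nlinarith [norm_nonneg (x + y), norm_nonneg x, norm_nonneg y]
  simpa using key (u k i - q i) (q i)

lemma rpow_lip (s T a b : ℝ) (hs : 2 ≤ s) (ha : 0 ≤ a) (hb : 0 ≤ b) (haT : a ≤ T) (hbT : b ≤ T) :
    |a ^ s - b ^ s| ≤ s * T ^ (s - 1) * |a - b| := by
  have := Convex.norm_image_sub_le_of_norm_hasDerivWithin_le (f := fun x : ℝ => x ^ s)
    (f' := fun x => s * x ^ (s - 1)) (C := s * T ^ (s - 1)) (s := Set.Icc 0 T) (x := b) (y := a)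
    (fun x hx => (Real.hasDerivAt_rpow_const (Or.inr (by linarith))).hasDerivWithinAt)
    (fun x hx => by
      have : 0 ≤ x := hx.1
      rw [Real.norm_of_nonneg (by positivity)]
      have := Real.rpow_le_rpow hx.1 hx.2 (by linarith : (0:ℝ) ≤ s - 1)
      gcongr)
    (convex_Icc 0 T) ⟨hb, hbT⟩ ⟨ha, haT⟩
  simpa using this

lemma rpow_split_aux (s R : ℝ) (hs : 2 ≤ s) (x y : ℂ) (hxy : ‖y‖ ≤ ‖x‖) (hx : ‖x‖ ≤ R) :
    |‖x + y‖ ^ s - ‖x‖ ^ s - ‖y‖ ^ s| ≤ ((s * 2 ^ (s - 1) + 1) * R ^ (s - 2)) * (‖x‖ * ‖y‖) := by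
  have hR : 0 ≤ R := (norm_nonneg x).trans hx
  have e : ∀ t : ℝ, 0 ≤ t → t ^ (s - 1) = t ^ (s - 2) * t := by
    intro t ht
    rw [show s - 1 = (s - 2) + 1 by ring, Real.rpow_add_of_nonneg ht (by linarith) (by norm_num),
      Real.rpow_one]
  have e' : ∀ t : ℝ, 0 ≤ t → t ^ s = t ^ (s - 1) * t := by
    intro t ht
    conv_lhs => rw [show s = (s - 1) + 1 by ring]
    rw [Real.rpow_add_of_nonneg ht (by linarith) (by norm_num), Real.rpow_one]
  have h1 := rpow_lip s (2 * ‖x‖) ‖x + y‖ ‖x‖ hs (norm_nonneg _) (norm_nonneg _)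
    (by linarith [norm_add_le x y]) (by linarith [norm_nonneg x])
  have h2 : |‖x + y‖ - ‖x‖| ≤ ‖y‖ := by
    simpa using abs_norm_sub_norm_le (x + y) x
  have hpx : ‖x‖ ^ (s - 1) ≤ R ^ (s - 2) * ‖x‖ := by
    rw [e _ (norm_nonneg x)]
    have := Real.rpow_le_rpow (norm_nonneg x) hx (by linarith : (0:ℝ) ≤ s - 2)
    gcongr
  have h3 : ‖y‖ ^ s ≤ ‖x‖ ^ (s - 1) * ‖y‖ := by
    rw [e' _ (norm_nonneg y)]
    have := Real.rpow_le_rpow (norm_nonneg y) hxy (by linarith : (0:ℝ) ≤ s - 1)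
    gcongr
  rw [Real.mul_rpow (by norm_num) (norm_nonneg x)] at h1
  have h4 : |‖x + y‖ ^ s - ‖x‖ ^ s| ≤ s * (2 ^ (s - 1) * ‖x‖ ^ (s - 1)) * ‖y‖ :=
    h1.trans (by gcongr)
  have h5 : 0 ≤ ‖y‖ ^ s := by positivity
  calc |‖x + y‖ ^ s - ‖x‖ ^ s - ‖y‖ ^ s| ≤ |‖x + y‖ ^ s - ‖x‖ ^ s| + |‖y‖ ^ s| := abs_sub _ _
    _ ≤ s * (2 ^ (s - 1) * ‖x‖ ^ (s - 1)) * ‖y‖ + ‖x‖ ^ (s - 1) * ‖y‖ := by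
        rw [abs_of_nonneg h5]; exact add_le_add h4 h3
    _ = (s * 2 ^ (s - 1) + 1) * ‖x‖ ^ (s - 1) * ‖y‖ := by ring
    _ ≤ (s * 2 ^ (s - 1) + 1) * (R ^ (s - 2) * ‖x‖) * ‖y‖ := by gcongr
    _ = _ := by ring

lemma rpow_split (s R : ℝ) (hs : 2 ≤ s) (x y : ℂ) (hy : ‖y‖ ≤ R) (hx : ‖x‖ ≤ R) :
    |‖x + y‖ ^ s - ‖x‖ ^ s - ‖y‖ ^ s| ≤ ((s * 2 ^ (s - 1) + 1) * R ^ (s - 2)) * (‖x‖ * ‖y‖) := by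
  rcases le_total ‖y‖ ‖x‖ with h | h
  · exact rpow_split_aux s R hs x y h hx
  · have := rpow_split_aux s R hs y x h hy
    rw [add_comm x y, mul_comm ‖x‖]
    convert! this using 2
    ring

/-- The weighted difference operator on pairs. -/
def Gop (d : ℕ) (J : ℕ → ℝ) (u : (Fin d → ℤ) → ℂ) (x : (Fin d → ℤ) × (Fin d → ℤ)) : ℂ :=
  (√(JbarSummand d J (x.1 - x.2)) : ℂ) * (u x.1 - u x.2)

lemma K_nonneg (d : ℕ) (J : ℕ → ℝ) (hJ : ∀ k, 0 ≤ J k) (m : Fin d → ℤ) :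
    0 ≤ JbarSummand d J m := by
  unfold JbarSummand; split_ifs
  · exact le_rfl
  · exact hJ _

lemma Gop_sq (d : ℕ) (J : ℕ → ℝ) (hJ : ∀ k, 0 ≤ J k) (u : (Fin d → ℤ) → ℂ)
    (x : (Fin d → ℤ) × (Fin d → ℤ)) :
    ‖Gop d J u x‖ ^ 2 = JbarSummand d J (x.1 - x.2) * ‖u x.1 - u x.2‖ ^ 2 := by
  unfold Gop
  rw [norm_mul, mul_pow, Complex.norm_real, Real.norm_of_nonneg (Real.sqrt_nonneg _),
    Real.sq_sqrt (K_nonneg d J hJ _)]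

lemma hasSum_left {d : ℕ} {κ f : (Fin d → ℤ) → ℝ} (hκ : Summable κ) (hf : Summable f)
    (hκ0 : ∀ k, 0 ≤ κ k) (hf0 : ∀ k, 0 ≤ f k) :
    HasSum (fun x : (Fin d → ℤ) × (Fin d → ℤ) => κ (x.1 - x.2) * f x.1)
      ((∑' k, κ k) * ∑' n, f n) := by
  have hs := hf.mul_of_nonneg hκ hf0 hκ0
  have h := hf.hasSum.mul hκ.hasSum hs
  let e : (Fin d → ℤ) × (Fin d → ℤ) ≃ (Fin d → ℤ) × (Fin d → ℤ) :=
    Equiv.prodShear (Equiv.refl _) (fun n => Equiv.subLeft n)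
  have h2 := (e.hasSum_iff).2 h
  rw [mul_comm]
  convert! h2 using 1
  funext x
  simp [e, mul_comm]

lemma hasSum_right {d : ℕ} {κ f : (Fin d → ℤ) → ℝ} (hκ : Summable κ) (hf : Summable f)
    (hκ0 : ∀ k, 0 ≤ κ k) (hf0 : ∀ k, 0 ≤ f k) :
    HasSum (fun x : (Fin d → ℤ) × (Fin d → ℤ) => κ (x.1 - x.2) * f x.2)
      ((∑' k, κ k) * ∑' n, f n) := by
  have hs := hf.mul_of_nonneg hκ hf0 hκ0
  have h := hf.hasSum.mul hκ.hasSum hs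
  let e : (Fin d → ℤ) × (Fin d → ℤ) ≃ (Fin d → ℤ) × (Fin d → ℤ) :=
    (Equiv.prodComm _ _).trans (Equiv.prodShear (Equiv.refl _) (fun n => Equiv.subRight n))
  have h2 := (e.hasSum_iff).2 h
  rw [mul_comm]
  convert! h2 using 1
  funext x
  simp [e, mul_comm]

lemma Gop_bound (d : ℕ) (J : ℕ → ℝ) (hJ : ∀ k, 0 ≤ J k) (hJb : Summable (JbarSummand d J))
    (u : (Fin d → ℤ) → ℂ) (hu : MemL2 d u) (θ : (Fin d → ℤ) → ℝ) (hθ0 : ∀ k, 0 ≤ θ k)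
    (hθ2 : ∀ k, θ k ≤ 2)
    (h : ∀ n m, ‖u n - u m‖ ^ 2 ≤ θ (n - m) * (‖u n‖ ^ 2 + ‖u m‖ ^ 2)) :
    Summable (fun x => ‖Gop d J u x‖ ^ 2) ∧
      ∑' x, ‖Gop d J u x‖ ^ 2 ≤ 2 * (∑' k, JbarSummand d J k * θ k) * mass d u := by
  have hK := K_nonneg d J hJ
  have hκ : Summable fun k => JbarSummand d J k * θ k :=
    Summable.of_nonneg_of_le (fun k => mul_nonneg (hK k) (hθ0 k))
      (fun k => mul_le_mul_of_nonneg_left (hθ2 k) (hK k)) (hJb.mul_right 2)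
  have hκ0 : ∀ k, 0 ≤ JbarSummand d J k * θ k := fun k => mul_nonneg (hK k) (hθ0 k)
  have h1 := hasSum_left hκ hu hκ0 (fun k => by positivity)
  have h2 := hasSum_right hκ hu hκ0 (fun k => by positivity)
  have h3 := h1.add h2
  have hle : ∀ x : (Fin d → ℤ) × (Fin d → ℤ), ‖Gop d J u x‖ ^ 2 ≤
      JbarSummand d J (x.1 - x.2) * θ (x.1 - x.2) * ‖u x.1‖ ^ 2 +
      JbarSummand d J (x.1 - x.2) * θ (x.1 - x.2) * ‖u x.2‖ ^ 2 := by
    intro x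
    rw [Gop_sq d J hJ]
    have := mul_le_mul_of_nonneg_left (h x.1 x.2) (hK (x.1 - x.2))
    linarith
  have hs : Summable (fun x => ‖Gop d J u x‖ ^ 2) :=
    Summable.of_nonneg_of_le (fun x => by positivity) hle h3.summable
  refine ⟨hs, ?_⟩
  have := hs.tsum_le_tsum hle h3.summable
  rw [h3.tsum_eq] at this
  unfold mass
  linarith

lemma Gop_summable (d : ℕ) (J : ℕ → ℝ) (hJ : ∀ k, 0 ≤ J k) (hJb : Summable (JbarSummand d J))
    (u : (Fin d → ℤ) → ℂ) (hu : MemL2 d u) : Summable (fun x => ‖Gop d J u x‖ ^ 2) :=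
  (Gop_bound d J hJ hJb u hu (fun _ => 2) (fun _ => by norm_num) (fun _ => le_rfl)
    (fun n m => norm_sub_sq_le _ _)).1

lemma Gop_le (d : ℕ) (J : ℕ → ℝ) (hJ : ∀ k, 0 ≤ J k) (hJb : Summable (JbarSummand d J))
    (u : (Fin d → ℤ) → ℂ) (hu : MemL2 d u) :
    ∑' x, ‖Gop d J u x‖ ^ 2 ≤ 2 * (∑' k, JbarSummand d J k * 2) * mass d u :=
  (Gop_bound d J hJ hJb u hu (fun _ => 2) (fun _ => by norm_num) (fun _ => le_rfl)
    (fun n m => norm_sub_sq_le _ _)).2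

lemma pairing_eq (d : ℕ) (J : ℕ → ℝ) (hJ : ∀ k, 0 ≤ J k) (hJb : Summable (JbarSummand d J))
    (u : (Fin d → ℤ) → ℂ) (hu : MemL2 d u) :
    pairing d J u = (1/2) * ∑' x, ‖Gop d J u x‖ ^ 2 := by
  rw [(Gop_summable d J hJ hJb u hu).tsum_prod]
  unfold pairing
  congr 2
  funext n
  congr 1
  funext m
  rw [Gop_sq d J hJ]
  unfold JbarSummand
  by_cases h : m = n
  · simp [h]
  · have : ¬ (n - m = 0) := fun h' => h (sub_eq_zero.1 h').symm
    simp [h, this]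

lemma mass_nonneg' (d : ℕ) (u : (Fin d → ℤ) → ℂ) : 0 ≤ mass d u :=
  tsum_nonneg fun _ => by positivity

lemma ppot_nonneg (d : ℕ) (p : ℝ) (u : (Fin d → ℤ) → ℂ) : 0 ≤ ppot d p u :=
  tsum_nonneg fun _ => by positivity

lemma pairing_nonneg (d : ℕ) (J : ℕ → ℝ) (hJ : ∀ k, 0 ≤ J k) (u : (Fin d → ℤ) → ℂ) :
    0 ≤ pairing d J u := by
  unfold pairing
  refine mul_nonneg (by norm_num) (tsum_nonneg fun n => tsum_nonneg fun m => ?_)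
  split_ifs
  · exact le_rfl
  · exact mul_nonneg (hJ _) (by positivity)

lemma norm_le_sqrt_mass (d : ℕ) (u : (Fin d → ℤ) → ℂ) (hu : MemL2 d u) (n : Fin d → ℤ) :
    ‖u n‖ ≤ √(mass d u) := by
  apply Real.le_sqrt_of_sq_le
  exact hu.le_tsum n (fun _ _ => by positivity)

lemma rpow_le_of_le (p c a : ℝ) (hp : 1 < p) (ha : 0 ≤ a) (h : a ^ (p - 1) ≤ c) :
    a ^ (p + 1) ≤ c * a ^ 2 := by
  rcases ha.eq_or_lt with rfl | h0
  · simp [Real.zero_rpow (by linarith : p + 1 ≠ 0)]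
  · rw [show p + 1 = (p - 1) + 2 by ring, Real.rpow_add h0]
    norm_num
    gcongr

lemma ppot_bound (d : ℕ) (p : ℝ) (hp : 1 < p) (u : (Fin d → ℤ) → ℂ) (hu : MemL2 d u) (c : ℝ)
    (h : ∀ n, ‖u n‖ ^ (p - 1) ≤ c) :
    Summable (fun n => ‖u n‖ ^ (p + 1)) ∧ ppot d p u ≤ c * mass d u := by
  have hle := fun n => rpow_le_of_le p c ‖u n‖ hp (norm_nonneg _) (h n)
  have hs : Summable (fun n => ‖u n‖ ^ (p + 1)) :=
    Summable.of_nonneg_of_le (fun n => by positivity) hle (hu.mul_left c)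
  refine ⟨hs, ?_⟩
  have := hs.tsum_le_tsum hle (hu.mul_left c)
  rwa [tsum_mul_left] at this

lemma ppot_summable (d : ℕ) (p : ℝ) (hp : 1 < p) (u : (Fin d → ℤ) → ℂ) (hu : MemL2 d u) :
    Summable (fun n => ‖u n‖ ^ (p + 1)) :=
  (ppot_bound d p hp u hu ((√(mass d u)) ^ (p - 1)) fun n =>
    Real.rpow_le_rpow (norm_nonneg _) (norm_le_sqrt_mass d u hu n) (by linarith)).1

lemma ppot_le (d : ℕ) (p : ℝ) (hp : 1 < p) (u : (Fin d → ℤ) → ℂ) (hu : MemL2 d u) :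
    ppot d p u ≤ (√(mass d u)) ^ (p - 1) * mass d u :=
  (ppot_bound d p hp u hu ((√(mass d u)) ^ (p - 1)) fun n =>
    Real.rpow_le_rpow (norm_nonneg _) (norm_le_sqrt_mass d u hu n) (by linarith)).2

/- scaling -/
lemma mass_smul (d : ℕ) (c : ℝ) (u : (Fin d → ℤ) → ℂ) :
    mass d (fun n => (c : ℂ) * u n) = c ^ 2 * mass d u := by
  unfold mass
  rw [← tsum_mul_left]
  congr 1; funext n
  simp [mul_pow]

lemma MemL2_smul (d : ℕ) (c : ℝ) (u : (Fin d → ℤ) → ℂ) (hu : MemL2 d u) :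
    MemL2 d (fun n => (c : ℂ) * u n) := by
  unfold MemL2 at *
  simpa [mul_pow] using hu.mul_left (c ^ 2)

lemma ppot_smul (d : ℕ) (p c : ℝ) (hc : 0 ≤ c) (u : (Fin d → ℤ) → ℂ) :
    ppot d p (fun n => (c : ℂ) * u n) = c ^ (p + 1) * ppot d p u := by
  unfold ppot
  rw [← tsum_mul_left]
  congr 1; funext n
  rw [norm_mul, Complex.norm_real, Real.norm_of_nonneg hc, Real.mul_rpow hc (norm_nonneg _)]

lemma pairing_smul (d : ℕ) (J : ℕ → ℝ) (c : ℝ) (u : (Fin d → ℤ) → ℂ) :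
    pairing d J (fun n => (c : ℂ) * u n) = c ^ 2 * pairing d J u := by
  unfold pairing
  rw [mul_left_comm, ← tsum_mul_left (a := c ^ 2)]
  congr 2; funext n
  rw [← tsum_mul_left (a := c ^ 2)]
  congr 1; funext m
  split_ifs
  · simp
  · rw [← mul_sub, norm_mul, mul_pow, Complex.norm_real, Real.norm_eq_abs, sq_abs]; ring

/- translation -/
lemma mass_shift (d : ℕ) (a : Fin d → ℤ) (u : (Fin d → ℤ) → ℂ) :
    mass d (fun n => u (n + a)) = mass d u := by
  unfold mass
  simpa only [Equiv.coe_addRight] using (Equiv.addRight a).tsum_eq (fun n => ‖u n‖ ^ 2)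

lemma MemL2_shift (d : ℕ) (a : Fin d → ℤ) (u : (Fin d → ℤ) → ℂ) (hu : MemL2 d u) :
    MemL2 d (fun n => u (n + a)) := by
  unfold MemL2 at *
  exact (Summable.comp_injective hu (add_left_injective a))

lemma ppot_shift (d : ℕ) (p : ℝ) (a : Fin d → ℤ) (u : (Fin d → ℤ) → ℂ) :
    ppot d p (fun n => u (n + a)) = ppot d p u := by
  unfold ppot
  exact (Equiv.addRight a).tsum_eq (fun n => ‖u n‖ ^ (p + 1))

lemma pairing_shift (d : ℕ) (J : ℕ → ℝ) (a : Fin d → ℤ) (u : (Fin d → ℤ) → ℂ) :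
    pairing d J (fun n => u (n + a)) = pairing d J u := by
  unfold pairing
  rw [← (Equiv.addRight a).tsum_eq (fun n => ∑' m : Fin d → ℤ,
    if m = n then 0 else J (latNorm (n - m)) * ‖u n - u m‖ ^ 2)]
  congr 2; funext n
  rw [← (Equiv.addRight a).tsum_eq (fun m : Fin d → ℤ =>
    if m = (Equiv.addRight a) n then 0 else
      J (latNorm ((Equiv.addRight a) n - m)) * ‖u ((Equiv.addRight a) n) - u m‖ ^ 2)]
  congr 1; funext m
  simp

lemma energy_shift (d : ℕ) (J : ℕ → ℝ) (p : ℝ) (a : Fin d → ℤ) (u : (Fin d → ℤ) → ℂ) :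
    energy d J p (fun n => u (n + a)) = energy d J p u := by
  unfold energy; rw [pairing_shift, ppot_shift]

lemma energy_bdd (d : ℕ) (J : ℕ → ℝ) (hJ : ∀ k, 0 ≤ J k) (p : ℝ) (hp : 1 < p) (ν : ℝ) :
    BddBelow {x : ℝ | ∃ q, MemL2 d q ∧ mass d q = ν ∧ energy d J p q = x} := by
  refine ⟨-((1/(p+1)) * ((√ν) ^ (p - 1) * ν)), ?_⟩
  rintro x ⟨q, hq, hm, rfl⟩
  have h1 := ppot_le d p hp q hq
  rw [hm] at h1
  have h2 := pairing_nonneg d J hJ q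
  have h3 : 0 ≤ 1 / (p + 1) := by apply div_nonneg <;> linarith
  have := mul_le_mul_of_nonneg_left h1 h3
  unfold energy
  linarith

lemma Ifun_le (d : ℕ) (J : ℕ → ℝ) (hJ : ∀ k, 0 ≤ J k) (p : ℝ) (hp : 1 < p)
    (q : (Fin d → ℤ) → ℂ) (hq : MemL2 d q) : Ifun d J p (mass d q) ≤ energy d J p q :=
  csInf_le (energy_bdd d J hJ p hp _) ⟨q, hq, rfl, rfl⟩

lemma scaling_bound (d : ℕ) (J : ℕ → ℝ) (hJ : ∀ k, 0 ≤ J k) (p : ℝ) (hp : 1 < p) (ν : ℝ)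
    (hν : 0 < ν) (u : (Fin d → ℤ) → ℂ) (hu : MemL2 d u) (hm : 0 < mass d u) :
    mass d u / ν * Ifun d J p ν + ((√(ν / mass d u)) ^ (p - 1) - 1) * ((1/(p+1)) * ppot d p u)
      ≤ energy d J p u := by
  set c := √(ν / mass d u) with hc
  have hc0 : 0 < c := Real.sqrt_pos.2 (by positivity)
  have hc2 : c ^ 2 = ν / mass d u := Real.sq_sqrt (by positivity)
  have h1 := Ifun_le d J hJ p hp _ (MemL2_smul d c u hu)
  rw [mass_smul, hc2, div_mul_cancel₀ _ hm.ne'] at h1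
  unfold energy at h1 ⊢
  rw [pairing_smul, ppot_smul _ _ _ hc0.le] at h1
  have e : c ^ (p + 1) = c ^ (p - 1) * c ^ 2 := by
    rw [show p + 1 = (p - 1) + 2 by ring, Real.rpow_add hc0]; norm_num
  rw [e] at h1
  have h2 : mass d u / ν * Ifun d J p ν ≤ mass d u / ν * (c ^ 2 * (1 / 2 * pairing d J u -
      c ^ (p - 1) * ((1/(p+1)) * ppot d p u))) := by
    apply mul_le_mul_of_nonneg_left _ (by positivity)
    linarith
  rw [← mul_assoc, hc2, div_mul_div_cancel₀ hν.ne', div_self hm.ne', one_mul] at h2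
  linarith

lemma summable_pi_prod (d : ℕ) (f : ℤ → ℝ) (hf0 : ∀ k, 0 ≤ f k) (hf : Summable f) :
    Summable fun n : Fin d → ℤ => ∏ i, f (n i) := by
  classical
  refine summable_of_sum_le (c := (∑' k, f k) ^ d)
    (fun n => Finset.prod_nonneg fun i _ => hf0 _) ?_
  intro S
  let T : Finset ℤ := S.biUnion fun n => Finset.univ.image n
  have hST : S ⊆ Fintype.piFinset fun _ : Fin d => T := by
    intro n hn
    rw [Fintype.mem_piFinset]
    intro i
    exact Finset.mem_biUnion.2 ⟨n, hn, Finset.mem_image_of_mem _ (Finset.mem_univ i)⟩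
  calc ∑ n ∈ S, ∏ i, f (n i) ≤ ∑ n ∈ Fintype.piFinset fun _ : Fin d => T, ∏ i, f (n i) :=
        Finset.sum_le_sum_of_subset_of_nonneg hST
          (fun n _ _ => Finset.prod_nonneg fun i _ => hf0 _)
    _ = ∏ _i : Fin d, ∑ k ∈ T, f k := (Finset.prod_univ_sum _ _).symm
    _ = (∑ k ∈ T, f k) ^ d := by simp
    _ ≤ (∑' k, f k) ^ d := by
        apply pow_le_pow_left₀ (Finset.sum_nonneg fun k _ => hf0 k)
        exact hf.sum_le_tsum _ (fun k _ => hf0 k)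

def l1 {d : ℕ} (n : Fin d → ℤ) : ℕ := ∑ i, (n i).natAbs

lemma l1_tri {d : ℕ} (n m : Fin d → ℤ) : l1 n ≤ l1 m + l1 (n - m) := by
  unfold l1
  rw [← Finset.sum_add_distrib]
  apply Finset.sum_le_sum
  intro i _
  simp only [Pi.sub_apply]
  omega

lemma l1_symm {d : ℕ} (n m : Fin d → ℤ) : l1 (n - m) = l1 (m - n) := by
  unfold l1
  apply Finset.sum_congr rfl
  intro i _
  simp only [Pi.sub_apply]
  omega

lemma summable_geom (d : ℕ) (r : ℝ) (h0 : 0 ≤ r) (h1 : r < 1) :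
    MemL2 d (fun n => ((r ^ l1 n : ℝ) : ℂ)) := by
  have hr : r ^ 2 < 1 := by nlinarith
  have hz : Summable fun k : ℤ => (r ^ 2) ^ k.natAbs := by
    apply Summable.of_nat_of_neg
    · simpa using summable_geometric_of_lt_one (by positivity) hr
    · simpa using summable_geometric_of_lt_one (by positivity) hr
  have := summable_pi_prod d _ (fun k => by positivity) hz
  unfold MemL2
  refine this.congr fun n => ?_
  rw [Complex.norm_real, Real.norm_of_nonneg (by positivity), Finset.prod_pow_eq_pow_sum, ← pow_mul,
    ← pow_mul, mul_comm]
  rfl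

lemma geom_diff (r : ℝ) (h0 : 0 ≤ r) (h1 : r ≤ 1) (a b c : ℕ) (hab : a ≤ b + c) (hba : b ≤ a + c) :
    (r ^ a - r ^ b) ^ 2 ≤ (1 - r ^ c) ^ 2 * ((r ^ a) ^ 2 + (r ^ b) ^ 2) := by
  have key : ∀ a b : ℕ, a ≤ b → b ≤ a + c →
      (r ^ a - r ^ b) ^ 2 ≤ (1 - r ^ c) ^ 2 * ((r ^ a) ^ 2 + (r ^ b) ^ 2) := by
    intro a b hab hba
    have e1 : r ^ b ≤ r ^ a := pow_le_pow_of_le_one h0 h1 hab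
    have e2 : r ^ (a + c) ≤ r ^ b := pow_le_pow_of_le_one h0 h1 hba
    rw [pow_add] at e2
    have e3 : r ^ a - r ^ b ≤ (1 - r ^ c) * r ^ a := by linarith
    calc (r ^ a - r ^ b) ^ 2 ≤ ((1 - r ^ c) * r ^ a) ^ 2 :=
          pow_le_pow_left₀ (by linarith) e3 2
      _ ≤ _ := by rw [mul_pow]; gcongr; nlinarith [sq_nonneg (r ^ b)]
  rcases le_total a b with h | h
  · exact key a b h hba
  · have := key b a h hab
    rw [add_comm ((r ^ a) ^ 2)]
    nlinarith

lemma exists_small_pairing (d : ℕ) (J : ℕ → ℝ) (hJ : ∀ k, 0 ≤ J k)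
    (hJb : Summable (JbarSummand d J)) (ν : ℝ) (hν : 0 < ν) (ε : ℝ) (hε : 0 < ε) :
    ∃ u, MemL2 d u ∧ mass d u = ν ∧ pairing d J u < ε := by
  have hT : Tendsto (fun r : ℝ => ∑' k, JbarSummand d J k * (1 - r ^ l1 k) ^ 2) (𝓝[<] 1)
      (𝓝 (∑' _k : Fin d → ℤ, (0 : ℝ))) := by
    refine tendsto_tsum_of_dominated_convergence hJb ?_ ?_
    · intro k
      have : Tendsto (fun r : ℝ => JbarSummand d J k * (1 - r ^ l1 k) ^ 2) (𝓝 1)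
          (𝓝 (JbarSummand d J k * (1 - 1 ^ l1 k) ^ 2)) := by
        apply Continuous.tendsto
        fun_prop
      simpa using this.mono_left nhdsWithin_le_nhds
    · have : ∀ᶠ r : ℝ in 𝓝[<] 1, r ∈ Set.Ioo (0:ℝ) 1 := Ioo_mem_nhdsLT (by norm_num)
      filter_upwards [this] with r hr k
      have hK := K_nonneg d J hJ k
      have h1 : r ^ l1 k ≤ 1 := pow_le_one₀ hr.1.le hr.2.le
      have h2 : 0 ≤ r ^ l1 k := pow_nonneg hr.1.le _
      rw [Real.norm_of_nonneg (by positivity)]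
      have : (1 - r ^ l1 k) ^ 2 ≤ 1 := by nlinarith
      nlinarith
  rw [tsum_zero] at hT
  have h1 : ∀ᶠ r : ℝ in 𝓝[<] 1, r ∈ Set.Ioo (0:ℝ) 1 := Ioo_mem_nhdsLT (by norm_num)
  have h2 := hT.eventually (gt_mem_nhds (show (0:ℝ) < ε / ν by positivity))
  obtain ⟨r, hr, hlt⟩ := (h1.and h2).exists
  set v : (Fin d → ℤ) → ℂ := fun n => ((r ^ l1 n : ℝ) : ℂ) with hv
  have hvm : MemL2 d v := summable_geom d r hr.1.le hr.2
  have hM : 0 < mass d v := by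
    have := norm_le_sqrt_mass d v hvm 0
    refine Real.sqrt_pos.1 (lt_of_lt_of_le ?_ this)
    rw [norm_pos_iff]
    have : r ^ l1 (0 : Fin d → ℤ) ≠ 0 := (pow_pos hr.1 _).ne'
    exact Complex.ofReal_ne_zero.2 this
  have hle := (Gop_bound d J hJ hJb v hvm (fun k => (1 - r ^ l1 k) ^ 2) (fun k => by positivity)
    (fun k => by
      have h1 : r ^ l1 k ≤ 1 := pow_le_one₀ hr.1.le hr.2.le
      have h2 : 0 ≤ r ^ l1 k := pow_nonneg hr.1.le _
      nlinarith)
    (fun n m => by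
      have h3 : (0:ℝ) ≤ r := hr.1.le
      simp only [hv]
      rw [← Complex.ofReal_sub, Complex.norm_real, Complex.norm_real, Complex.norm_real,
        Real.norm_eq_abs, sq_abs, Real.norm_eq_abs, sq_abs, Real.norm_eq_abs, sq_abs]
      apply geom_diff r h3 hr.2.le
      · exact l1_tri n m
      · rw [l1_symm]; exact l1_tri m n)).2
  refine ⟨fun n => ((√(ν / mass d v) : ℝ) : ℂ) * v n, MemL2_smul d _ v hvm, ?_, ?_⟩
  · rw [mass_smul, Real.sq_sqrt (by positivity), div_mul_cancel₀ _ hM.ne']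
  · rw [pairing_smul, Real.sq_sqrt (by positivity), pairing_eq d J hJ hJb v hvm]
    calc ν / mass d v * (1 / 2 * ∑' x, ‖Gop d J v x‖ ^ 2)
        ≤ ν / mass d v * (1 / 2 * (2 * (∑' k, JbarSummand d J k * (1 - r ^ l1 k) ^ 2) * mass d v)) := by
          gcongr
      _ = ν * (∑' k, JbarSummand d J k * (1 - r ^ l1 k) ^ 2) := by field_simp
      _ < ν * (ε / ν) := by gcongr
      _ = ε := by field_simp

lemma latNorm_single {d : ℕ} (i : Fin d) : latNorm (Pi.single i (1:ℤ)) = 1 := by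
  unfold latNorm
  apply le_antisymm
  · apply Finset.sup_le
    intro j _
    by_cases h : j = i
    · subst h; simp
    · simp [h]
  · have := Finset.le_sup (f := fun j => ((Pi.single i (1:ℤ) : Fin d → ℤ) j).natAbs)
      (Finset.mem_univ i)
    simpa using this

lemma pairing_pos (d : ℕ) (hd : 1 ≤ d) (J : ℕ → ℝ) (hJ : ∀ k, 0 ≤ J k)
    (hJb : Summable (JbarSummand d J)) (hJ1 : 0 < J 1) (u : (Fin d → ℤ) → ℂ) (hu : MemL2 d u)
    (hm : 0 < mass d u) : 0 < pairing d J u := by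
  refine lt_of_le_of_ne (pairing_nonneg d J hJ u) fun h0 => ?_
  rw [pairing_eq d J hJ hJb u hu] at h0
  have h1 : ∑' x, ‖Gop d J u x‖ ^ 2 = 0 := by linarith
  have hs := Gop_summable d J hJ hJb u hu
  have h2 : ∀ x, ‖Gop d J u x‖ ^ 2 = 0 := by
    have := (hs.hasSum_iff.2 h1)
    have h3 := (hasSum_zero_iff_of_nonneg (fun x => by positivity)).1 this
    exact fun x => congrFun h3 x
  let i : Fin d := ⟨0, hd⟩
  let e : Fin d → ℤ := Pi.single i 1
  have he : e ≠ 0 := by simp [e]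
  have step : ∀ n, u (n + e) = u n := by
    intro n
    have h3 := h2 (n + e, n)
    rw [Gop_sq d J hJ] at h3
    simp only [add_sub_cancel_left] at h3
    have : JbarSummand d J e = J 1 := by
      unfold JbarSummand; rw [if_neg he, latNorm_single]
    rw [this] at h3
    rcases mul_eq_zero.1 h3 with h | h
    · exact absurd h hJ1.ne'
    · exact sub_eq_zero.1 (norm_eq_zero.1 (pow_eq_zero_iff (by norm_num)|>.1 h))
  have step2 : ∀ n (k : ℕ), u (n + k • e) = u n := by
    intro n k
    induction k with
    | zero => simp
    | succ k ih => rw [succ_nsmul, ← add_assoc, step, ih]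
  have hz : ∀ n, u n = 0 := by
    intro n
    have hinj : Function.Injective fun k : ℕ => n + k • e := by
      intro a b hab
      have := congrFun hab i
      simpa [e] using this
    have h4 := Summable.comp_injective hu hinj
    have h5 : Summable fun _ : ℕ => ‖u n‖ ^ 2 := by
      refine h4.congr fun k => ?_
      simp only [Function.comp, step2]
    have := (summable_const_iff _).1 h5
    simpa using this
  apply hm.ne'
  unfold mass
  simp [hz]

lemma exists_large (d : ℕ) (p : ℝ) (hp : 1 < p) (u : (Fin d → ℤ) → ℂ) (hu : MemL2 d u) (c : ℝ)
    (h : c * mass d u < ppot d p u) : ∃ n, c ≤ ‖u n‖ ^ (p - 1) := by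
  by_contra! hcon
  exact absurd (ppot_bound d p hp u hu c fun n => (hcon n).le).2 (not_le.2 h)

lemma exists_minimizer (d : ℕ) (J : ℕ → ℝ) (hJ : ∀ k, 0 ≤ J k)
    (hJb : Summable (JbarSummand d J)) (p : ℝ) (hp : 1 < p) (ν : ℝ) (hν : 0 < ν)
    (hI : Ifun d J p ν < 0) :
    ∃ q : (Fin d → ℤ) → ℂ, MemL2 d q ∧ mass d q = ν ∧ energy d J p q = Ifun d J p ν := by
  set I := Ifun d J p ν with hIdef
  have hne : {x : ℝ | ∃ q, MemL2 d q ∧ mass d q = ν ∧ energy d J p q = x}.Nonempty := by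
    obtain ⟨u, hu, hm, -⟩ := exists_small_pairing d J hJ hJb ν hν 1 one_pos
    exact ⟨_, u, hu, hm, rfl⟩
  set c : ℝ := (p + 1) * (-I / 2) / (2 * ν) with hc
  have hp1 : 0 < p + 1 := by linarith
  have hcpos : 0 < c := by
    have : 0 < -I / 2 := by linarith
    positivity
  -- minimizing sequence, centred
  have hex : ∀ k : ℕ, ∃ q : (Fin d → ℤ) → ℂ, MemL2 d q ∧ mass d q = ν ∧
      energy d J p q < I + (-I / 2) / ((k : ℝ) + 1) ∧ c ≤ ‖q 0‖ ^ (p - 1) := by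
    intro k
    have hk : (0:ℝ) < (-I / 2) / ((k : ℝ) + 1) := by
      have : 0 < -I / 2 := by linarith
      positivity
    obtain ⟨x, ⟨q, hq, hm, rfl⟩, hlt⟩ := exists_lt_of_csInf_lt hne
      (show sInf {x : ℝ | ∃ q, MemL2 d q ∧ mass d q = ν ∧ energy d J p q = x} <
        I + (-I / 2) / ((k : ℝ) + 1) by
          change I < _
          linarith)
    have hk2 : (-I / 2) / ((k : ℝ) + 1) ≤ -I / 2 := by
      apply div_le_self (by linarith)
      have : (0:ℝ) ≤ k := Nat.cast_nonneg k
      linarith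
    have hlow : (p + 1) * (-I / 2) < ppot d p q := by
      have h1 := pairing_nonneg d J hJ q
      have h2 : -I / 2 < (1 / (p + 1)) * ppot d p q := by
        unfold energy at hlt
        linarith
      rw [one_div, lt_inv_mul_iff₀ hp1] at h2
      exact h2
    obtain ⟨n, hn⟩ := exists_large d p hp q hq c (by
      rw [hm]
      have : c * ν = (p + 1) * (-I / 2) / 2 := by rw [hc]; field_simp
      rw [this]
      have : 0 < (p + 1) * (-I / 2) := mul_pos hp1 (by linarith)
      linarith)
    refine ⟨fun m => q (m + n), MemL2_shift d n q hq, ?_, ?_, ?_⟩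
    · rw [mass_shift, hm]
    · rw [energy_shift]; exact hlt
    · simpa using hn
  choose v hv hvm hve hv0 using hex
  -- compactness
  have hK : IsCompact (Set.pi Set.univ fun _ : Fin d → ℤ => Metric.closedBall (0:ℂ) (√ν)) :=
    isCompact_univ_pi fun _ => isCompact_closedBall _ _
  obtain ⟨q, -, φ, hφ, hlim⟩ := hK.tendsto_subseq (x := v) (fun k => by
    intro n _
    rw [mem_closedBall_zero_iff, ← hvm k]
    exact norm_le_sqrt_mass d (v k) (hv k) n)
  set u : ℕ → (Fin d → ℤ) → ℂ := fun k => v (φ k) with hu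
  have hpt : ∀ n, Tendsto (fun k => u k n) atTop (𝓝 (q n)) := fun n =>
    (tendsto_pi_nhds.1 hlim) n
  have hu2 : ∀ k, MemL2 d (u k) := fun k => hv _
  have hum : ∀ k, mass d (u k) = ν := fun k => hvm _
  have hfin : ∀ S : Finset (Fin d → ℤ), ∑ n ∈ S, ‖q n‖ ^ 2 ≤ ν := by
    intro S
    have h1 : Tendsto (fun k => ∑ n ∈ S, ‖u k n‖ ^ 2) atTop (𝓝 (∑ n ∈ S, ‖q n‖ ^ 2)) :=
      tendsto_finsetSum _ fun n _ => ((hpt n).norm.pow 2)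
    refine le_of_tendsto' h1 fun k => ?_
    rw [← hum k]
    exact (hu2 k).sum_le_tsum _ fun _ _ => by positivity
  have hq : MemL2 d q := summable_of_sum_le (fun n => by positivity) hfin
  have hqν : mass d q ≤ ν := hq.tsum_le_of_sum_le hfin
  have hq0 : c ≤ ‖q 0‖ ^ (p - 1) := by
    have h1 : Tendsto (fun k => ‖u k 0‖ ^ (p - 1)) atTop (𝓝 (‖q 0‖ ^ (p - 1))) :=
      (hpt 0).norm.rpow_const (Or.inr (by linarith))
    exact ge_of_tendsto' h1 fun k => hv0 _
  have hq0' : 0 < ‖q 0‖ := by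
    rcases (norm_nonneg (q 0)).eq_or_lt with h | h
    · rw [← h, Real.zero_rpow (by linarith)] at hq0
      linarith
    · exact h
  have hμ : 0 < mass d q := by
    have := norm_le_sqrt_mass d q hq 0
    exact Real.sqrt_pos.1 (lt_of_lt_of_le hq0' this)
  have hN : 0 < ppot d p q := by
    have := (ppot_summable d p hp q hq).le_tsum 0 (fun _ _ => by positivity)
    exact lt_of_lt_of_le (by positivity) this
  -- splitting
  set r : ℕ → (Fin d → ℤ) → ℂ := fun k n => u k n - q n with hr
  have hr2 : ∀ k, MemL2 d (r k) := fun k => sub_summable hq (hu2 k)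
  have hM : Tendsto (fun k => mass d (r k)) atTop (𝓝 (ν - mass d q)) := by
    have h := split_sq q u ν hq hu2 (fun k => (hum k).le) hpt
    have h2 := h.const_sub ν
    refine h2.congr fun k => ?_
    have : ∑' i, ‖u k i‖ ^ 2 = ν := hum k
    rw [this]
    unfold mass
    simp only [hr]
    ring
  have hP : Tendsto (fun k => pairing d J (u k) - pairing d J (r k)) atTop
      (𝓝 (pairing d J q)) := by
    have h := split_sq (Gop d J q) (fun k => Gop d J (u k))
      (2 * (∑' k, JbarSummand d J k * 2) * ν)
      (Gop_summable d J hJ hJb q hq) (fun k => Gop_summable d J hJ hJb _ (hu2 k))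
      (fun k => by have := Gop_le d J hJ hJb _ (hu2 k); rwa [hum k] at this)
      (fun x => by
        unfold Gop
        exact ((hpt _).sub (hpt _)).const_mul _)
    have h2 := h.const_mul (1/2)
    rw [← pairing_eq d J hJ hJb q hq] at h2
    refine h2.congr fun k => ?_
    rw [pairing_eq d J hJ hJb _ (hu2 k), pairing_eq d J hJ hJb _ (hr2 k), mul_sub]
    congr 3
    funext x
    congr 2
    simp only [Gop, hr]
    ring
  have hNs : Tendsto (fun k => ppot d p (u k) - ppot d p (r k)) atTop (𝓝 (ppot d p q)) := by
    have hqb : ∀ n, ‖q n‖ ≤ √ν := fun n =>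
      (norm_le_sqrt_mass d q hq n).trans (Real.sqrt_le_sqrt hqν)
    refine split_tendsto (fun z => ‖z‖ ^ (p + 1))
      (((p + 1) * 2 ^ (p + 1 - 1) + 1) * (2 * √ν) ^ (p + 1 - 2)) q u ν hq hu2
      (fun k => (hum k).le) hpt
      (fun k => ppot_summable d p hp _ (hu2 k)) (fun k => ppot_summable d p hp _ (hr2 k))
      (ppot_summable d p hp q hq) ?_
    intro k n
    have h1 := norm_le_sqrt_mass d (u k) (hu2 k) n
    rw [hum k] at h1
    have h2 := norm_sub_le (u k n) (q n)
    have h3 := hqb n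
    have h4 := Real.sqrt_nonneg ν
    have := rpow_split (p + 1) (2 * √ν) (by linarith) (u k n - q n) (q n) (by linarith)
      (by linarith)
    simpa only [sub_add_cancel] using this
  have hE : Tendsto (fun k => energy d J p (u k) - energy d J p (r k)) atTop
      (𝓝 (energy d J p q)) := by
    have h := (hP.const_mul (1/2)).sub (hNs.const_mul (1/(p+1)))
    refine h.congr fun k => ?_
    unfold energy
    ring
  have hEu : Tendsto (fun k => energy d J p (u k)) atTop (𝓝 I) := by
    have h1 : Tendsto (fun k : ℕ => I + (-I / 2) / ((k : ℝ) + 1)) atTop (𝓝 (I + 0)) := by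
      apply Tendsto.const_add
      have := (tendsto_one_div_add_atTop_nhds_zero_nat (𝕜 := ℝ)).const_mul (-I / 2)
      rw [mul_zero] at this
      refine this.congr fun k => ?_
      ring
    rw [add_zero] at h1
    have h2 : Tendsto (fun k => energy d J p (v k)) atTop (𝓝 I) :=
      tendsto_of_tendsto_of_tendsto_of_le_of_le tendsto_const_nhds h1
        (fun k => by
          have := Ifun_le d J hJ p hp _ (hv k)
          rwa [hvm k] at this)
        (fun k => (hve k).le)
    exact h2.comp hφ.tendsto_atTop
  have hEr : Tendsto (fun k => energy d J p (r k)) atTop (𝓝 (I - energy d J p q)) := by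
    have := hEu.sub hE
    refine this.congr fun k => ?_
    ring
  have hMev : ∀ᶠ k in atTop, mass d (r k) < ν :=
    hM.eventually (gt_mem_nhds (by linarith))
  have hlow : ∀ᶠ k in atTop, mass d (r k) / ν * I ≤ energy d J p (r k) := by
    filter_upwards [hMev] with k hk
    rcases (mass_nonneg' d (r k)).eq_or_lt with h | h
    · rw [← h, zero_div, zero_mul]
      have h1 := ppot_le d p hp _ (hr2 k)
      rw [← h, mul_zero] at h1
      have h2 := le_antisymm h1 (ppot_nonneg d p _)
      unfold energy
      rw [h2]
      have := pairing_nonneg d J hJ (r k)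
      linarith
    · have h1 := scaling_bound d J hJ p hp ν hν (r k) (hr2 k) h
      have h2 : 1 ≤ √(ν / mass d (r k)) := by
        rw [Real.one_le_sqrt, one_le_div h]; exact hk.le
      have h3 := Real.one_le_rpow h2 (by linarith : 0 ≤ p - 1)
      have h4 : 0 ≤ (1 / (p + 1)) * ppot d p (r k) :=
        mul_nonneg (by positivity) (ppot_nonneg d p _)
      have h5 := mul_nonneg (sub_nonneg.2 h3) h4
      linarith
  have hfinal : (ν - mass d q) / ν * I ≤ I - energy d J p q :=
    le_of_tendsto_of_tendsto ((hM.div_const ν).mul_const I) hEr hlow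
  have hqs := scaling_bound d J hJ p hp ν hν q hq hμ
  rw [← hIdef] at hqs
  have e1 : (ν - mass d q) / ν * I = I - mass d q / ν * I := by field_simp
  rw [e1] at hfinal
  have h6 : ((√(ν / mass d q)) ^ (p - 1) - 1) * ((1/(p+1)) * ppot d p q) ≤ 0 := by linarith
  have h7 : (0:ℝ) < (1/(p+1)) * ppot d p q := by positivity
  have h8 : (√(ν / mass d q)) ^ (p - 1) ≤ 1 := by
    by_contra! hcon
    have := mul_pos (sub_pos.2 hcon) h7
    linarith
  have h9 : √(ν / mass d q) ≤ 1 := by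
    by_contra! hcon
    have := Real.one_lt_rpow hcon (by linarith : 0 < p - 1)
    linarith
  have h10 : ν ≤ mass d q := by
    rw [Real.sqrt_le_one, div_le_one hμ] at h9
    exact h9
  have h11 : mass d q = ν := le_antisymm hqν h10
  refine ⟨q, hq, h11, le_antisymm ?_ ?_⟩
  · rw [h11, div_self hν.ne', one_mul] at hfinal
    linarith
  · have := Ifun_le d J hJ p hp q hq
    rwa [h11] at this

lemma GN_at_nuZero (d : ℕ) (J : ℕ → ℝ) (p : ℝ)
    (ν : ℝ) (hν : 0 < ν) (h : ν < nuZero d J p) : ∃ ν', ν < ν' ∧ GNineq d J p ν' := by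
  obtain ⟨x, hx, hlt⟩ := exists_lt_of_lt_csSup (Set.insert_nonempty _ _) h
  rcases hx with rfl | ⟨hx0, hx⟩
  · linarith
  · exact ⟨x, hlt, hx⟩

lemma not_GN (d : ℕ) (J : ℕ → ℝ) (p : ℝ) (h0 : 0 < nuZero d J p)
    (ν : ℝ) (h : nuZero d J p < ν) : ¬ GNineq d J p ν := by
  intro hG
  have hb : BddAbove (insert 0 {ν : ℝ | 0 < ν ∧ GNineq d J p ν}) := by
    by_contra hcon
    unfold nuZero at h0
    rw [Real.sSup_of_not_bddAbove hcon] at h0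
    exact lt_irrefl _ h0
  have := le_csSup hb (Set.mem_insert_of_mem (0:ℝ) (show ν ∈ {ν : ℝ | 0 < ν ∧ GNineq d J p ν} from
    ⟨h0.trans h, hG⟩))
  unfold nuZero at h
  linarith

lemma Ifun_neg (d : ℕ) (J : ℕ → ℝ) (hJ : ∀ k, 0 ≤ J k) (p : ℝ) (hp : 1 < p)
    (ν : ℝ) (hν : 0 < ν) (h : ¬ GNineq d J p ν) : Ifun d J p ν < 0 := by
  unfold GNineq at h
  push Not at h
  obtain ⟨q, hq, hlt⟩ := h
  have hp1 : 0 < p + 1 := by linarith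
  have hD := pairing_nonneg d J hJ q
  have hm0 := mass_nonneg' d q
  have hN : 0 < ppot d p q := lt_of_le_of_lt (by positivity) hlt
  have hm : 0 < mass d q := by
    refine lt_of_le_of_ne hm0 fun h => ?_
    have h1 := ppot_le d p hp q hq
    rw [← h, mul_zero] at h1
    linarith
  set c := √(ν / mass d q) with hc
  have hc0 : 0 < c := Real.sqrt_pos.2 (by positivity)
  have hc2 : c ^ 2 = ν / mass d q := Real.sq_sqrt (by positivity)
  have h1 := Ifun_le d J hJ p hp _ (MemL2_smul d c q hq)
  rw [mass_smul, hc2, div_mul_cancel₀ _ hm.ne'] at h1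
  refine lt_of_le_of_lt h1 ?_
  unfold energy
  rw [pairing_smul, ppot_smul _ _ _ hc0.le]
  have e : c ^ (p + 1) = c ^ (p - 1) * c ^ 2 := by
    rw [show p + 1 = (p - 1) + 2 by ring, Real.rpow_add hc0]; norm_num
  have e2 : c ^ (p - 1) * (ν ^ (-(p - 1) / 2) * mass d q ^ ((p - 1) / 2)) = 1 := by
    rw [hc, Real.sqrt_eq_rpow, ← Real.rpow_mul (by positivity), Real.div_rpow hν.le hm.le,
      show -(p - 1) / 2 = -((p - 1) / 2) by ring, Real.rpow_neg hν.le,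
      show 1 / 2 * (p - 1) = (p - 1) / 2 by ring]
    have : 0 < ν ^ ((p - 1) / 2) := by positivity
    have : 0 < mass d q ^ ((p - 1) / 2) := by positivity
    field_simp
  have h3 := mul_lt_mul_of_pos_left hlt (show 0 < c ^ (p - 1) by positivity)
  have h4 : (p + 1) / 2 * pairing d J q < c ^ (p - 1) * ppot d p q := by
    refine lt_of_eq_of_lt ?_ h3
    linear_combination (-((p + 1) / 2 * pairing d J q)) * e2
  have h5 : 1 / 2 * pairing d J q < 1 / (p + 1) * (c ^ (p - 1) * ppot d p q) := by
    rw [one_div (p + 1), lt_inv_mul_iff₀ hp1]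
    linarith
  rw [e]
  have h6 := mul_lt_mul_of_pos_left h5 (show 0 < c ^ 2 by positivity)
  linarith

lemma energy_pos (d : ℕ) (hd : 1 ≤ d) (J : ℕ → ℝ) (hJ : ∀ k, 0 ≤ J k)
    (hJb : Summable (JbarSummand d J)) (hJ1 : 0 < J 1) (p : ℝ) (hp : 1 < p) (ν ν' : ℝ)
    (hν : 0 < ν) (hlt : ν < ν') (hG : GNineq d J p ν') (q : (Fin d → ℤ) → ℂ) (hq : MemL2 d q)
    (hm : mass d q = ν) : 0 < energy d J p q := by
  have hD := pairing_pos d hd J hJ hJb hJ1 q hq (by rw [hm]; exact hν)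
  have h := hG q hq
  have hν' : 0 < ν' := hν.trans hlt
  have hp1 : 0 < p + 1 := by linarith
  have e : ν' ^ (-(p - 1) / 2) * ν ^ ((p - 1) / 2) < 1 := by
    rw [show -(p - 1) / 2 = -((p - 1) / 2) by ring, Real.rpow_neg hν'.le,
      inv_mul_lt_iff₀ (by positivity), mul_one]
    exact Real.rpow_lt_rpow hν.le hlt (by linarith)
  rw [hm] at h
  have h2 : ppot d p q < (p + 1) / 2 * pairing d J q := by
    refine lt_of_le_of_lt h ?_
    have := mul_lt_mul_of_pos_right e (show 0 < (p + 1) / 2 * pairing d J q by positivity)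
    linarith
  have h3 : 1 / (p + 1) * ppot d p q < 1 / 2 * pairing d J q := by
    rw [one_div (p + 1), inv_mul_lt_iff₀ hp1]
    linarith
  unfold energy
  linarith

theorem stmt10 (d : ℕ) (hd : 1 ≤ d) (p : ℝ) (hp : 1 < p) (J : ℕ → ℝ)
    (hJpos : ∀ k, 0 ≤ J k) (hJbar : Summable (JbarSummand d J)) (hJ1 : 0 < J 1)
    (α : ℝ≥0∞) (hα : 0 < α) (horder : JOrder d J α)
    (hpsup : 1 + 4 * alphaPrime α / d ≤ p)
    (hnu0 : 0 < nuZero d J p) :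
    ∀ ν : ℝ,
      (nuZero d J p < ν →
        Ifun d J p ν < 0 ∧
          ∃ q : (Fin d → ℤ) → ℂ, MemL2 d q ∧ mass d q = ν ∧
            energy d J p q = Ifun d J p ν) ∧
      (0 < ν → ν < nuZero d J p →
        Ifun d J p ν = 0 ∧
          ¬ ∃ q : (Fin d → ℤ) → ℂ, MemL2 d q ∧ mass d q = ν ∧
            energy d J p q = 0) := by
  intro ν
  refine ⟨fun h => ?_, fun hν h => ?_⟩
  · have hν : 0 < ν := hnu0.trans h
    have hI := Ifun_neg d J hJpos p hp ν hν (not_GN d J p hnu0 ν h)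
    exact ⟨hI, exists_minimizer d J hJpos hJbar p hp ν hν hI⟩
  · obtain ⟨ν', hlt, hG⟩ := GN_at_nuZero d J p ν hν h
    have hpos := energy_pos d hd J hJpos hJbar hJ1 p hp ν ν' hν hlt hG
    refine ⟨le_antisymm ?_ ?_, ?_⟩
    · refine le_of_forall_pos_le_add fun ε hε => ?_
      obtain ⟨u, hu, hm, hD⟩ := exists_small_pairing d J hJpos hJbar ν hν ε hε
      have h1 := Ifun_le d J hJpos p hp u hu
      rw [hm] at h1
      have h2 : 0 ≤ 1 / (p + 1) * ppot d p u :=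
        mul_nonneg (by apply div_nonneg <;> linarith) (ppot_nonneg d p u)
      have h3 := pairing_nonneg d J hJpos u
      unfold energy at h1
      linarith
    · apply Real.sInf_nonneg
      rintro x ⟨q, hq, hm, rfl⟩
      exact (hpos q hq hm).le
    · rintro ⟨q, hq, hm, hE⟩
      exact absurd hE (hpos q hq hm).ne'
end
end

section
/- In the two-dimensional non-radial setting, assume p ≥ 1 + 4α₁′α₂′/(α₁′+α₂′). Then ν₀ > 0; equivalently, there exists a constant C > 0 such that Σ |u|^{p+1} ≤ C · M[u]^{(p−1)/2} ⟨Lu,u⟩ for every u ∈ ℓ²(Z²). -/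
open scoped BigOperators ENNReal
open Filter Topology

noncomputable section

/-- `J^{(i)}` is of order `α ∈ (0,∞]` (one-dimensional coupling): for finite `α`,
`k^{1+α} J_k` tends to a finite positive limit; for `α = ∞`, `k^{1+β} J_k → 0` for
every `β > 0`. -/
def JOrder1 (J : ℕ → ℝ) (α : ℝ≥0∞) : Prop :=
  if α = ⊤ then
    ∀ β : ℝ, 0 < β → Tendsto (fun k : ℕ => (k : ℝ) ^ ((1 : ℝ) + β) * J k) atTop (𝓝 0)
  else
    ∃ A : ℝ, 0 < A ∧ Tendsto (fun k : ℕ => (k : ℝ) ^ ((1 : ℝ) + α.toReal) * J k) atTop (𝓝 A)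

/-- The quadratic form of the two-dimensional non-radial operator:
`⟨Lu,u⟩ = (1/2) Σ_m Σ_{n ≠ n'} J⁽¹⁾_{|n-n'|} |u_{n,m} - u_{n',m}|²
        + (1/2) Σ_n Σ_{m ≠ m'} J⁽²⁾_{|m-m'|} |u_{n,m} - u_{n,m'}|²`. -/
def pairing2 (J1 J2 : ℕ → ℝ) (u : ℤ × ℤ → ℂ) : ℝ :=
  (1/2) * (∑' m : ℤ, ∑' n : ℤ, ∑' n' : ℤ,
      if n' = n then 0 else J1 (n - n').natAbs * ‖u (n, m) - u (n', m)‖ ^ 2) +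
  (1/2) * (∑' n : ℤ, ∑' m : ℤ, ∑' m' : ℤ,
      if m' = m then 0 else J2 (m - m').natAbs * ‖u (n, m) - u (n, m')‖ ^ 2)

/-- The mass `M[u] = Σ |u|²` on `ℤ²`. -/
def mass2 (u : ℤ × ℤ → ℂ) : ℝ := ∑' z : ℤ × ℤ, ‖u z‖ ^ 2

/-- Membership in `ℓ²(ℤ²)`. -/
def MemL2two (u : ℤ × ℤ → ℂ) : Prop := Summable fun z : ℤ × ℤ => ‖u z‖ ^ 2

/-- The potential term `Σ |u|^{p+1}` on `ℤ²`. -/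
def ppot2 (p : ℝ) (u : ℤ × ℤ → ℂ) : ℝ := ∑' z : ℤ × ℤ, ‖u z‖ ^ (p + 1)

/-- The energy `H[u] = (1/2)⟨Lu,u⟩ - (1/(p+1)) Σ |u|^{p+1}` on `ℤ²`. -/
def energy2 (J1 J2 : ℕ → ℝ) (p : ℝ) (u : ℤ × ℤ → ℂ) : ℝ :=
  (1/2) * pairing2 J1 J2 u - (1/(p+1)) * ppot2 p u

/-- `I_ν = inf {H[q] : q ∈ ℓ²(ℤ²), M[q] = ν}`. -/
def Ifun2 (J1 J2 : ℕ → ℝ) (p ν : ℝ) : ℝ :=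
  sInf {x : ℝ | ∃ q, MemL2two q ∧ mass2 q = ν ∧ energy2 J1 J2 p q = x}

/-- The Gagliardo–Nirenberg-type inequality at mass level `ν` on `ℤ²`. -/
def GNineq2 (J1 J2 : ℕ → ℝ) (p ν : ℝ) : Prop :=
  ∀ q : ℤ × ℤ → ℂ, MemL2two q →
    ppot2 p q ≤ ((p + 1) / 2) * ν ^ (-(p - 1) / 2) * (mass2 q) ^ ((p - 1) / 2) *
      pairing2 J1 J2 q

/-- The excitation threshold `ν₀` on `ℤ²`, with `ν₀ = 0` if the GN inequality fails
for every positive mass level. -/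
def nuZero2 (J1 J2 : ℕ → ℝ) (p : ℝ) : ℝ :=
  sSup (insert 0 {ν : ℝ | 0 < ν ∧ GNineq2 J1 J2 p ν})


/-- translation difference energy -/
def Wd {E : Type*} [NormedAddCommGroup E] (g : ℤ × ℤ → E) (v : ℤ × ℤ) : ℝ≥0∞ :=
  ∑' z, ENNReal.ofReal (‖g z - g (z + v)‖ ^ 2)

lemma Wd_add {E : Type*} [NormedAddCommGroup E] (g : ℤ × ℤ → E) (v w : ℤ × ℤ) :
    Wd g (v + w) ≤ 2 * Wd g v + 2 * Wd g w := by
  have h1 : Wd g w = ∑' z, ENNReal.ofReal (‖g (z + v) - g (z + v + w)‖ ^ 2) :=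
    ((Equiv.addRight v).tsum_eq (fun z => ENNReal.ofReal (‖g z - g (z + w)‖ ^ 2))).symm
  rw [h1]
  unfold Wd
  rw [← ENNReal.tsum_mul_left, ← ENNReal.tsum_mul_left, ← ENNReal.tsum_add]
  refine ENNReal.tsum_le_tsum fun z => ?_
  rw [show (2 : ℝ≥0∞) = ENNReal.ofReal 2 by simp, ← ENNReal.ofReal_mul (by norm_num),
    ← ENNReal.ofReal_mul (by norm_num), ← ENNReal.ofReal_add (by positivity) (by positivity)]
  apply ENNReal.ofReal_le_ofReal
  have := norm_sub_le_norm_sub_add_norm_sub (g z) (g (z + v)) (g (z + v + w))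
  rw [← add_assoc]
  nlinarith [sq_nonneg (‖g z - g (z + v)‖ - ‖g (z + v) - g (z + v + w)‖), norm_nonneg (g z - g (z + v + w))]

lemma Wd_nsmul {E : Type*} [NormedAddCommGroup E] (g : ℤ × ℤ → E) (v : ℤ × ℤ) (n : ℕ) :
    Wd g (n • v) ≤ (n : ℝ≥0∞) ^ 2 * Wd g v := by
  have h1 : ∀ i : ℕ, Wd g v
      = ∑' z, ENNReal.ofReal (‖g (z + i • v) - g (z + (i + 1) • v)‖ ^ 2) := fun i => by
    have := ((Equiv.addRight (i • v)).tsum_eq (fun z => ENNReal.ofReal (‖g z - g (z + v)‖ ^ 2))).symm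
    unfold Wd
    rw [this]
    refine tsum_congr fun z => ?_
    simp [add_smul, add_assoc]
  have h2 : (n : ℝ≥0∞) * Wd g v
      = ∑' z, ∑ i ∈ Finset.range n, ENNReal.ofReal (‖g (z + i • v) - g (z + (i + 1) • v)‖ ^ 2) := by
    rw [Summable.tsum_finsetSum (fun _ _ => ENNReal.summable)]
    rw [Finset.sum_congr rfl (fun i _ => (h1 i).symm)]
    simp
  rw [sq, mul_assoc, h2, ← ENNReal.tsum_mul_left]
  refine ENNReal.tsum_le_tsum fun z => ?_
  rw [← ENNReal.ofReal_sum_of_nonneg (fun _ _ => by positivity), ← ENNReal.ofReal_natCast n,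
    ← ENNReal.ofReal_mul (by positivity)]
  apply ENNReal.ofReal_le_ofReal
  have h3 : ‖g z - g (z + n • v)‖ ≤ ∑ i ∈ Finset.range n, ‖g (z + i • v) - g (z + (i + 1) • v)‖ := by
    have := Finset.sum_range_sub' (fun i => g (z + i • v)) n
    simp only [zero_smul, add_zero] at this
    rw [← this]
    exact norm_sum_le _ _
  have h4 := sq_sum_le_card_mul_sum_sq (s := Finset.range n) (f := fun i => ‖g (z + i • v) - g (z + (i + 1) • v)‖)
  rw [Finset.card_range] at h4
  exact (pow_le_pow_left₀ (norm_nonneg _) h3 2).trans h4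

/-- Faber-Krahn, counting step. -/
lemma FK_count (g : ℤ × ℤ → ℝ) (A : Finset (ℤ × ℤ)) (hA : ∀ z, z ∉ A → g z = 0) (R1 R2 : ℕ)
    (hR : 2 * A.card ≤ R1 * R2) :
    ((R1 * R2 : ℕ) : ℝ≥0∞) * ∑' z, ENNReal.ofReal (g z ^ 2) ≤
      2 * ∑ i ∈ Finset.range R1, ∑ j ∈ Finset.range R2, Wd g (((i + 1 : ℕ) : ℤ), ((j + 1 : ℕ) : ℤ)) := by
  rw [← Finset.sum_product']
  unfold Wd
  rw [← Summable.tsum_finsetSum (fun _ _ => ENNReal.summable), ← ENNReal.tsum_mul_left,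
    ← ENNReal.tsum_mul_left]
  refine ENNReal.tsum_le_tsum fun z => ?_
  set B := Finset.range R1 ×ˢ Finset.range R2 with hB
  let sh : ℕ × ℕ → ℤ × ℤ := fun x => z + (((x.1 + 1 : ℕ) : ℤ), ((x.2 + 1 : ℕ) : ℤ))
  have hinj : Function.Injective sh := by
    rintro ⟨a, b⟩ ⟨c, d⟩ h
    simp only [sh, add_right_inj, Prod.mk.injEq] at h
    ext <;> simp <;> omega
  have hcard : (B.filter (fun x => sh x ∈ A)).card ≤ A.card :=
    Finset.card_le_card_of_injOn sh (fun x hx => by simpa using (Finset.mem_filter.1 hx).2) hinj.injOn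
  have hsplit := Finset.card_filter_add_card_filter_not (s := B) (fun x => sh x ∈ A)
  have hBc : B.card = R1 * R2 := by simp [hB]
  have hle : R1 * R2 ≤ 2 * (B.filter (fun x => ¬ sh x ∈ A)).card := by omega
  calc ((R1 * R2 : ℕ) : ℝ≥0∞) * ENNReal.ofReal (g z ^ 2)
      ≤ ((2 * (B.filter (fun x => ¬ sh x ∈ A)).card : ℕ) : ℝ≥0∞) * ENNReal.ofReal (g z ^ 2) := by
        gcongr
    _ = 2 * ∑ x ∈ B.filter (fun x => ¬ sh x ∈ A), ENNReal.ofReal (g z ^ 2) := by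
        simp [mul_assoc]
    _ = 2 * ∑ x ∈ B.filter (fun x => ¬ sh x ∈ A), ENNReal.ofReal (‖g z - g (sh x)‖ ^ 2) := by
        congr 1
        refine Finset.sum_congr rfl fun x hx => ?_
        rw [hA _ (Finset.mem_filter.1 hx).2]
        simp
    _ ≤ _ := by
        refine mul_le_mul' le_rfl ?_
        exact Finset.sum_le_sum_of_subset (Finset.filter_subset (fun x => ¬ sh x ∈ A) B)

lemma star (J : ℕ → ℝ) (hpos : ∀ k, 0 ≤ J k) (hJ1 : 0 < J 1) (α : ℝ≥0∞) (hJ : JOrder1 J α) :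
    ∃ C : ℝ, 0 < C ∧ ∀ T : ℕ → ℝ≥0∞, (∀ i, T i ≤ (i : ℝ≥0∞) ^ 2 * T 1) → ∀ R : ℕ, 1 ≤ R →
      ∑ i ∈ Finset.range R, T (i + 1) ≤
        ENNReal.ofReal (C * (R : ℝ) ^ (1 + 2 * alphaPrime α)) *
          ∑' i : ℕ, ENNReal.ofReal (J (i + 1)) * T (i + 1) := by
  have hT1 : ∀ T : ℕ → ℝ≥0∞, T 1 ≤ ENNReal.ofReal (1 / J 1) *
      ∑' i : ℕ, ENNReal.ofReal (J (i + 1)) * T (i + 1) := fun T => by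
    calc T 1 = ENNReal.ofReal (1 / J 1) * (ENNReal.ofReal (J (0 + 1)) * T (0 + 1)) := by
          rw [← mul_assoc, ← ENNReal.ofReal_mul (by positivity)]
          simp [hJ1.ne']
      _ ≤ _ := by gcongr; exact ENNReal.le_tsum (f := fun i : ℕ => ENNReal.ofReal (J (i + 1)) * T (i + 1)) 0
  by_cases hα : α < 2
  · have ht : α ≠ ⊤ := (hα.trans (by simp)).ne
    simp only [JOrder1, ht, if_false] at hJ
    obtain ⟨A, hA, hlim⟩ := hJ
    have hev := hlim.eventually (lt_mem_nhds (half_lt_self hA))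
    obtain ⟨K, hK⟩ := eventually_atTop.1 hev
    have e : 1 + 2 * alphaPrime α = 1 + α.toReal := by simp [alphaPrime, hα]; ring
    rw [e]
    have hα0 : 0 ≤ α.toReal := ENNReal.toReal_nonneg
    refine ⟨2 / A + (K : ℝ) ^ 3 * (1 / J 1), by positivity, fun T hT R hR => ?_⟩
    set S := ∑' i : ℕ, ENNReal.ofReal (J (i + 1)) * T (i + 1) with hS
    have hR1 : (1 : ℝ) ≤ R := by exact_mod_cast hR
    have hRp : (1 : ℝ) ≤ (R : ℝ) ^ (1 + α.toReal) := Real.one_le_rpow hR1 (by positivity)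
    have key : ∀ i ∈ Finset.range R, T (i + 1) ≤
        ENNReal.ofReal (2 / A * (R : ℝ) ^ (1 + α.toReal)) * (ENNReal.ofReal (J (i + 1)) * T (i + 1))
          + (if i ∈ Finset.range K then (K : ℝ≥0∞) ^ 2 * T 1 else 0) := by
      intro i hi
      by_cases hiK : i + 1 < K
      · rw [if_pos (by simp; omega)]
        refine le_add_left ((hT _).trans ?_)
        gcongr
      · refine le_add_right ?_
        rw [← mul_assoc, ← ENNReal.ofReal_mul (by positivity)]
        have h := hK (i + 1) (by omega)
        have hle : ((i + 1 : ℕ) : ℝ) ^ (1 + α.toReal) ≤ (R : ℝ) ^ (1 + α.toReal) := by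
          apply Real.rpow_le_rpow (by positivity) _ (by positivity)
          exact_mod_cast Finset.mem_range.1 hi
        have : 1 ≤ 2 / A * (R : ℝ) ^ (1 + α.toReal) * J (i + 1) := by
          have h2 : A / 2 ≤ (R : ℝ) ^ (1 + α.toReal) * J (i + 1) :=
            h.le.trans (mul_le_mul_of_nonneg_right hle (hpos _))
          rw [mul_assoc]
          calc (1 : ℝ) = 2 / A * (A / 2) := by field_simp
            _ ≤ _ := by gcongr
        calc T (i + 1) = 1 * T (i + 1) := (one_mul _).symm
          _ ≤ _ := by gcongr; exact ENNReal.one_le_ofReal.2 this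
    refine (Finset.sum_le_sum key).trans ?_
    rw [Finset.sum_add_distrib, ← Finset.mul_sum]
    have h1 : ∑ i ∈ Finset.range R, ENNReal.ofReal (J (i + 1)) * T (i + 1) ≤ S := ENNReal.sum_le_tsum _
    have h2 : ∑ i ∈ Finset.range R, (if i ∈ Finset.range K then (K : ℝ≥0∞) ^ 2 * T 1 else 0) ≤
        ENNReal.ofReal ((K : ℝ) ^ 3 * (1 / J 1) * (R : ℝ) ^ (1 + α.toReal)) * S := by
      rw [← Finset.sum_filter]
      calc _ ≤ ∑ i ∈ Finset.range K, (K : ℝ≥0∞) ^ 2 * T 1 :=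
            Finset.sum_le_sum_of_subset (fun x hx => (Finset.mem_filter.1 hx).2)
        _ = (K : ℝ≥0∞) ^ 3 * T 1 := by simp; ring
        _ ≤ (K : ℝ≥0∞) ^ 3 * (ENNReal.ofReal (1 / J 1) * S) := by gcongr; exact hT1 T
        _ = ENNReal.ofReal ((K : ℝ) ^ 3 * (1 / J 1)) * S := by
            rw [ENNReal.ofReal_mul (by positivity), ENNReal.ofReal_pow (by positivity)]
            simp [mul_assoc]
        _ ≤ _ := by
            exact mul_le_mul' (ENNReal.ofReal_le_ofReal (le_mul_of_one_le_right (by positivity) hRp)) le_rfl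
    rw [add_mul, ENNReal.ofReal_add (by positivity) (by positivity), add_mul]
    gcongr
  · have e : alphaPrime α = 1 := by simp [alphaPrime, hα]
    rw [e]
    refine ⟨1 / J 1, by positivity, fun T hT R hR => ?_⟩
    set S := ∑' i : ℕ, ENNReal.ofReal (J (i + 1)) * T (i + 1) with hS
    calc ∑ i ∈ Finset.range R, T (i + 1) ≤ ∑ i ∈ Finset.range R, (R : ℝ≥0∞) ^ 2 * T 1 := by
          refine Finset.sum_le_sum fun i hi => (hT _).trans ?_
          gcongr
          exact Finset.mem_range.1 hi
      _ = (R : ℝ≥0∞) ^ 3 * T 1 := by simp; ring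
      _ ≤ (R : ℝ≥0∞) ^ 3 * (ENNReal.ofReal (1 / J 1) * S) := by gcongr; exact hT1 T
      _ = _ := by
          rw [ENNReal.ofReal_mul (by positivity), show (1 + 2 * 1 : ℝ) = ((3 : ℕ) : ℝ) by norm_num,
            Real.rpow_natCast, ENNReal.ofReal_pow (by positivity)]
          simp; ring

lemma trunc_tele (c : ℕ → ℝ) (hc : Antitone c) (x y : ℝ) :
    ∑' n : ℕ, ENNReal.ofReal (((min x (c n) - min x (c (n + 1))) - (min y (c n) - min y (c (n + 1)))) ^ 2)
      ≤ ENNReal.ofReal ((x - y) ^ 2) := by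
  wlog hxy : y ≤ x generalizing x y
  · have := this y x (le_of_not_ge hxy)
    rw [show (x - y) ^ 2 = (y - x) ^ 2 by ring]
    refine le_trans (le_of_eq ?_) this
    refine tsum_congr fun n => ?_
    congr 1; ring
  apply ENNReal.tsum_le_of_sum_range_le
  intro N
  rw [← ENNReal.ofReal_sum_of_nonneg (fun _ _ => by positivity)]
  apply ENNReal.ofReal_le_ofReal
  have hnn : ∀ n, 0 ≤ (min x (c n) - min x (c (n + 1))) - (min y (c n) - min y (c (n + 1))) := by
    intro n
    have := hc (Nat.le_succ n)
    simp only [Nat.succ_eq_add_one] at this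
    rcases min_cases x (c n) with h | h <;> rcases min_cases y (c n) with h' | h' <;>
    rcases min_cases x (c (n+1)) with h1 | h1 <;> rcases min_cases y (c (n+1)) with h1' | h1' <;> linarith
  refine (Finset.sum_sq_le_sq_sum_of_nonneg (fun i _ => hnn i)).trans ?_
  refine pow_le_pow_left₀ (Finset.sum_nonneg fun i _ => hnn i) ?_ 2
  rw [Finset.sum_sub_distrib, Finset.sum_range_sub' (fun n => min x (c n)), Finset.sum_range_sub' (fun n => min y (c n))]
  rcases min_cases x (c 0) with h | h <;> rcases min_cases y (c 0) with h' | h' <;>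
    rcases min_cases x (c N) with h1 | h1 <;> rcases min_cases y (c N) with h1' | h1' <;> linarith

/-- directional energy -/
def Edir {E : Type*} [NormedAddCommGroup E] (J : ℕ → ℝ) (g : ℤ × ℤ → E) (e : ℤ × ℤ) : ℝ≥0∞ :=
  ∑' i : ℕ, ENNReal.ofReal (J (i + 1)) * Wd g ((i + 1) • e)

lemma ceil_bound (X s a : ℝ) (hX : 1 ≤ X) (hs : 0 ≤ s) (ha : 0 < a) (ha1 : a ≤ 1) :
    ((⌈X ^ s⌉₊ : ℕ) : ℝ) ^ (2 * a) ≤ 4 * X ^ (2 * (s * a)) := by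
  have h1 : 1 ≤ X ^ s := Real.one_le_rpow hX hs
  have h2 : ((⌈X ^ s⌉₊ : ℕ) : ℝ) ≤ 2 * X ^ s := by
    have := (Nat.ceil_lt_add_one (zero_le_one.trans h1)).le
    linarith
  calc _ ≤ (2 * X ^ s) ^ (2 * a) := Real.rpow_le_rpow (by positivity) h2 (by positivity)
    _ = 2 ^ (2 * a) * X ^ (2 * (s * a)) := by
        rw [Real.mul_rpow (by norm_num) (by positivity), ← Real.rpow_mul (by positivity)]
        ring_nf
    _ ≤ _ := by
        gcongr
        calc (2 : ℝ) ^ (2 * a) ≤ 2 ^ (2 : ℝ) := Real.rpow_le_rpow_of_exponent_le (by norm_num) (by linarith)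
          _ = 4 := by norm_num

lemma FK (J1 J2 : ℕ → ℝ) (a b C1 C2 : ℝ) (ha : 0 < a) (hb : 0 < b) (ha1 : a ≤ 1) (hb1 : b ≤ 1)
    (hC1 : 0 < C1) (hC2 : 0 < C2)
    (h1 : ∀ T : ℕ → ℝ≥0∞, (∀ i, T i ≤ (i : ℝ≥0∞) ^ 2 * T 1) → ∀ R : ℕ, 1 ≤ R →
      ∑ i ∈ Finset.range R, T (i + 1) ≤
        ENNReal.ofReal (C1 * (R : ℝ) ^ (1 + 2 * a)) *
          ∑' i : ℕ, ENNReal.ofReal (J1 (i + 1)) * T (i + 1))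
    (h2 : ∀ T : ℕ → ℝ≥0∞, (∀ i, T i ≤ (i : ℝ≥0∞) ^ 2 * T 1) → ∀ R : ℕ, 1 ≤ R →
      ∑ i ∈ Finset.range R, T (i + 1) ≤
        ENNReal.ofReal (C2 * (R : ℝ) ^ (1 + 2 * b)) *
          ∑' i : ℕ, ENNReal.ofReal (J2 (i + 1)) * T (i + 1))
    (k : ℕ) (g : ℤ × ℤ → ℝ) (A : Finset (ℤ × ℤ)) (hA : ∀ z, z ∉ A → g z = 0)
    (hcard : A.card ≤ 4 ^ (k + 2)) :
    ∑' z, ENNReal.ofReal (g z ^ 2) ≤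
      ENNReal.ofReal (16384 * (C1 + C2) * ((4 : ℝ) ^ k) ^ (2 * (a * b / (a + b)))) *
        (Edir J1 g (1, 0) + Edir J2 g (0, 1)) := by
  set θ := a * b / (a + b) with hθ
  have hθ1 : θ ≤ 1 := by
    rw [hθ, div_le_one (by positivity)]; nlinarith
  have hθ0 : 0 ≤ θ := by positivity
  set X : ℝ := 2 * 4 ^ (k + 2) with hX
  have hX1 : 1 ≤ X := by
    have : (1 : ℝ) ≤ 4 ^ (k + 2) := one_le_pow₀ (by norm_num)
    linarith
  set R1 := ⌈X ^ (b / (a + b))⌉₊ with hR1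
  set R2 := ⌈X ^ (a / (a + b))⌉₊ with hR2
  have hR1p : 1 ≤ R1 := Nat.one_le_ceil_iff.2 (by positivity)
  have hR2p : 1 ≤ R2 := Nat.one_le_ceil_iff.2 (by positivity)
  have hRR : X ≤ (R1 : ℝ) * R2 := by
    calc X = X ^ (b / (a + b)) * X ^ (a / (a + b)) := by
          rw [← Real.rpow_add (by positivity), ← add_div, add_comm b a, div_self (by positivity), Real.rpow_one]
      _ ≤ _ := mul_le_mul (Nat.le_ceil _) (Nat.le_ceil _) (by positivity) (by positivity)
  have hRRn : 2 * A.card ≤ R1 * R2 := by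
    have : 2 * 4 ^ (k + 2) ≤ R1 * R2 := by
      rw [hX] at hRR
      exact_mod_cast hRR
    omega
  have hXθ : X ^ (2 * θ) ≤ 1024 * ((4 : ℝ) ^ k) ^ (2 * θ) := by
    rw [show X = 32 * 4 ^ k by rw [hX]; ring, Real.mul_rpow (by norm_num) (by positivity)]
    gcongr
    calc (32 : ℝ) ^ (2 * θ) ≤ 32 ^ (2 : ℝ) := Real.rpow_le_rpow_of_exponent_le (by norm_num) (by linarith)
      _ = 1024 := by norm_num
  have hRa : (R1 : ℝ) ^ (2 * a) ≤ 4096 * ((4 : ℝ) ^ k) ^ (2 * θ) := by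
    have := ceil_bound X (b / (a + b)) a hX1 (by positivity) ha ha1
    rw [show b / (a + b) * a = θ by rw [hθ]; ring] at this
    linarith
  have hRb : (R2 : ℝ) ^ (2 * b) ≤ 4096 * ((4 : ℝ) ^ k) ^ (2 * θ) := by
    have := ceil_bound X (a / (a + b)) b hX1 (by positivity) hb hb1
    rw [show a / (a + b) * b = θ by rw [hθ]; ring] at this
    linarith
  have hT : ∀ e : ℤ × ℤ, ∀ i : ℕ, Wd g (i • e) ≤ (i : ℝ≥0∞) ^ 2 * Wd g (1 • e) := fun e i => by
    simpa using Wd_nsmul g e i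
  have s1 : ∑ i ∈ Finset.range R1, Wd g ((i + 1) • ((1, 0) : ℤ × ℤ)) ≤
      R1 * (ENNReal.ofReal (C1 * (4096 * ((4 : ℝ) ^ k) ^ (2 * θ))) * Edir J1 g (1, 0)) := by
    refine (h1 (fun i => Wd g (i • (1, 0))) (hT _) R1 hR1p).trans ?_
    change _ * Edir J1 g (1, 0) ≤ _
    rw [← mul_assoc, ← ENNReal.ofReal_natCast R1, ← ENNReal.ofReal_mul (by positivity)]
    refine mul_le_mul' (ENNReal.ofReal_le_ofReal ?_) le_rfl
    rw [Real.rpow_add (by positivity), Real.rpow_one]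
    calc _ = (R1 : ℝ) * (C1 * (R1 : ℝ) ^ (2 * a)) := by ring
      _ ≤ _ := by gcongr
  have s2 : ∑ i ∈ Finset.range R2, Wd g ((i + 1) • ((0, 1) : ℤ × ℤ)) ≤
      R2 * (ENNReal.ofReal (C2 * (4096 * ((4 : ℝ) ^ k) ^ (2 * θ))) * Edir J2 g (0, 1)) := by
    refine (h2 (fun i => Wd g (i • (0, 1))) (hT _) R2 hR2p).trans ?_
    change _ * Edir J2 g (0, 1) ≤ _
    rw [← mul_assoc, ← ENNReal.ofReal_natCast R2, ← ENNReal.ofReal_mul (by positivity)]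
    refine mul_le_mul' (ENNReal.ofReal_le_ofReal ?_) le_rfl
    rw [Real.rpow_add (by positivity), Real.rpow_one]
    calc _ = (R2 : ℝ) * (C2 * (R2 : ℝ) ^ (2 * b)) := by ring
      _ ≤ _ := by gcongr
  have hmain := FK_count g A hA R1 R2 hRRn
  set q := ((4 : ℝ) ^ k) ^ (2 * θ) with hq
  have hq0 : 0 ≤ q := by positivity
  have hsum : ∑ i ∈ Finset.range R1, ∑ j ∈ Finset.range R2, Wd g (((i + 1 : ℕ) : ℤ), ((j + 1 : ℕ) : ℤ))
      ≤ 2 * (R2 * ∑ i ∈ Finset.range R1, Wd g ((i + 1) • ((1, 0) : ℤ × ℤ)))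
        + 2 * (R1 * ∑ j ∈ Finset.range R2, Wd g ((j + 1) • ((0, 1) : ℤ × ℤ))) := by
    calc _ ≤ ∑ i ∈ Finset.range R1, ∑ j ∈ Finset.range R2,
          (2 * Wd g ((i + 1) • ((1, 0) : ℤ × ℤ)) + 2 * Wd g ((j + 1) • ((0, 1) : ℤ × ℤ))) := by
          refine Finset.sum_le_sum fun i _ => Finset.sum_le_sum fun j _ => ?_
          refine le_trans (le_of_eq ?_) (Wd_add g _ _)
          congr 1
          ext <;> simp
      _ = _ := by
          simp only [Finset.sum_add_distrib, Finset.sum_const, Finset.card_range, nsmul_eq_mul,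
            ← Finset.mul_sum]
          ring
  have hfin : ((R1 * R2 : ℕ) : ℝ≥0∞) * ∑' z, ENNReal.ofReal (g z ^ 2) ≤
      ((R1 * R2 : ℕ) : ℝ≥0∞) * (ENNReal.ofReal (16384 * (C1 + C2) * q) *
        (Edir J1 g (1, 0) + Edir J2 g (0, 1))) := by
    refine hmain.trans ?_
    calc _ ≤ 2 * (2 * (R2 * (R1 * (ENNReal.ofReal (C1 * (4096 * q)) * Edir J1 g (1, 0))))
        + 2 * (R1 * (R2 * (ENNReal.ofReal (C2 * (4096 * q)) * Edir J2 g (0, 1))))) := by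
          refine mul_le_mul' le_rfl (hsum.trans ?_)
          gcongr
      _ = ((R1 * R2 : ℕ) : ℝ≥0∞) * (4 * ENNReal.ofReal (C1 * (4096 * q)) * Edir J1 g (1, 0) +
          4 * ENNReal.ofReal (C2 * (4096 * q)) * Edir J2 g (0, 1)) := by
          push_cast; ring
      _ ≤ _ := by
          rw [mul_add (ENNReal.ofReal _)]
          refine mul_le_mul' le_rfl (add_le_add (mul_le_mul' ?_ le_rfl) (mul_le_mul' ?_ le_rfl)) <;>
          · rw [show (4 : ℝ≥0∞) = ENNReal.ofReal 4 by simp, ← ENNReal.ofReal_mul (by norm_num)]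
            apply ENNReal.ofReal_le_ofReal
            nlinarith [mul_nonneg hC1.le hq0, mul_nonneg hC2.le hq0]
  have hne : ((R1 * R2 : ℕ) : ℝ≥0∞) ≠ 0 := by
    simp; omega
  exact (ENNReal.mul_le_mul_iff_right hne (ENNReal.natCast_ne_top _)).1 hfin

lemma Edir_trunc (J : ℕ → ℝ) (u : ℤ × ℤ → ℂ) (e : ℤ × ℤ) (c : ℕ → ℝ) (hc : Antitone c) :
    ∑' n : ℕ, Edir J (fun z => min ‖u z‖ (c n) - min ‖u z‖ (c (n + 1))) e ≤ Edir J u e := by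
  unfold Edir
  rw [ENNReal.tsum_comm]
  refine ENNReal.tsum_le_tsum fun i => ?_
  rw [ENNReal.tsum_mul_left]
  refine mul_le_mul' le_rfl ?_
  unfold Wd
  rw [ENNReal.tsum_comm]
  refine ENNReal.tsum_le_tsum fun z => ?_
  simp only [Real.norm_eq_abs, sq_abs]
  refine (trunc_tele c hc _ _).trans (ENNReal.ofReal_le_ofReal ?_)
  exact sq_le_sq.2 (by simpa using abs_norm_sub_norm_le (u z) (u (z + (i + 1) • e)))

lemma level_card (u : ℤ × ℤ → ℂ) (hu : MemL2two u) (c : ℝ) (hc : 0 < c) :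
    ∃ A : Finset (ℤ × ℤ), (∀ z, z ∉ A → ‖u z‖ ≤ c) ∧ (A.card : ℝ) * c ^ 2 ≤ mass2 u := by
  have hfin : {z | c < ‖u z‖}.Finite := by
    have h := (tendsto_order.1 (Summable.tendsto_cofinite_zero hu)).2 (c ^ 2) (by positivity)
    refine Set.Finite.subset (Filter.eventually_cofinite.1 h) fun z hz => ?_
    simp only [Set.mem_ofPred_eq, not_lt] at hz ⊢
    gcongr
  refine ⟨hfin.toFinset, fun z hz => by simpa using hz, ?_⟩
  calc _ = ∑ z ∈ hfin.toFinset, c ^ 2 := by simp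
    _ ≤ ∑ z ∈ hfin.toFinset, ‖u z‖ ^ 2 := by
        refine Finset.sum_le_sum fun z hz => ?_
        have : c < ‖u z‖ := by simpa using hz
        gcongr
    _ ≤ _ := Summable.sum_le_tsum _ (fun _ _ => by positivity) hu

lemma main_ineq (p : ℝ) (hp : 1 < p) (J1 J2 : ℕ → ℝ) (a b K : ℝ) (hK : 0 < K)
    (ha : 0 < a) (hb : 0 < b)
    (hps : 1 + 4 * a * b / (a + b) ≤ p)
    (hFK : ∀ (k : ℕ) (g : ℤ × ℤ → ℝ) (A : Finset (ℤ × ℤ)) (_ : ∀ z, z ∉ A → g z = 0)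
      (_ : A.card ≤ 4 ^ (k + 2)),
      ∑' z, ENNReal.ofReal (g z ^ 2) ≤
        ENNReal.ofReal (K * ((4 : ℝ) ^ k) ^ (2 * (a * b / (a + b)))) *
          (Edir J1 g (1, 0) + Edir J2 g (0, 1)))
    (u : ℤ × ℤ → ℂ) (hu : MemL2two u) (hM : 0 < mass2 u) :
    ∑' z, ENNReal.ofReal (‖u z‖ ^ (p + 1)) ≤
      ENNReal.ofReal (16 * K * mass2 u ^ ((p - 1) / 2)) * (Edir J1 u (1, 0) + Edir J2 u (0, 1)) := by
  set S := √(mass2 u) with hS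
  have hS0 : 0 < S := Real.sqrt_pos.2 hM
  have hSS : S ^ 2 = mass2 u := Real.sq_sqrt hM.le
  let c : ℕ → ℝ := fun n => S * (1 / 2) ^ (n + 1)
  have hc : Antitone c := antitone_nat_of_succ_le fun n => by
    simp only [c]
    have : (0 : ℝ) < (1 / 2) ^ (n + 1) := by positivity
    rw [pow_succ (1 / 2 : ℝ) (n + 1)]
    nlinarith
  let g : ℕ → ℤ × ℤ → ℝ := fun n z => min ‖u z‖ (c n) - min ‖u z‖ (c (n + 1))
  have hpt : ∀ z, ENNReal.ofReal (‖u z‖ ^ (p + 1)) ≤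
      ∑' n : ℕ, ENNReal.ofReal (16 * (S * (1 / 2) ^ n) ^ (p - 1)) * ENNReal.ofReal (g n z ^ 2) := by
    intro z
    rcases eq_or_lt_of_le (norm_nonneg (u z)) with h0 | h0
    · rw [← h0, Real.zero_rpow (by linarith)]
      simp
    have hle : ‖u z‖ ≤ S := by
      apply Real.le_sqrt_of_sq_le
      exact hu.le_tsum z (fun _ _ => by positivity)
    obtain ⟨n, hn1, hn2⟩ := exists_nat_pow_near_of_lt_one (x := ‖u z‖ / S) (y := (1 / 2 : ℝ))
      (by positivity) ((div_le_one hS0).2 hle) (by norm_num) (by norm_num)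
    rw [lt_div_iff₀ hS0] at hn1
    rw [div_le_iff₀ hS0] at hn2
    refine le_trans ?_ (ENNReal.le_tsum n)
    rw [← ENNReal.ofReal_mul (by positivity)]
    apply ENNReal.ofReal_le_ofReal
    have hg : g n z = S * (1 / 2) ^ (n + 2) := by
      have e1 : min ‖u z‖ (c n) = c n := min_eq_right (by simp only [c]; linarith)
      have e2 : min ‖u z‖ (c (n + 1)) = c (n + 1) :=
        min_eq_right ((hc (Nat.le_succ n)).trans (by simp only [c]; linarith))
      simp only [g, e1, e2, c]
      ring
    have hug : ‖u z‖ ≤ 4 * g n z := by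
      rw [hg]; rw [pow_add]; linarith
    have e : ‖u z‖ ^ (p + 1) = ‖u z‖ ^ (p - 1) * ‖u z‖ ^ 2 := by
      rw [← Real.rpow_natCast, ← Real.rpow_add h0]; congr 1; push_cast; ring
    rw [e]
    calc _ ≤ (S * (1 / 2) ^ n) ^ (p - 1) * (4 * g n z) ^ 2 := by
          gcongr
          linarith
      _ = _ := by ring
  have hn : ∀ n : ℕ, ENNReal.ofReal (16 * (S * (1 / 2) ^ n) ^ (p - 1)) * ∑' z, ENNReal.ofReal (g n z ^ 2)
      ≤ ENNReal.ofReal (16 * K * mass2 u ^ ((p - 1) / 2)) *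
        (Edir J1 (g n) (1, 0) + Edir J2 (g n) (0, 1)) := by
    intro n
    have hcpos : 0 < c (n + 1) := by simp only [c]; positivity
    obtain ⟨A, hA, hAc⟩ := level_card u hu (c (n + 1)) hcpos
    have hcard : A.card ≤ 4 ^ (n + 2) := by
      have : (A.card : ℝ) ≤ 4 ^ (n + 2) := by
        have e : c (n + 1) ^ 2 * 4 ^ (n + 2) = mass2 u := by
          rw [← hSS]
          simp only [c]
          rw [mul_pow, ← pow_mul, mul_comm (n + 1 + 1) 2, pow_mul, mul_assoc, ← mul_pow]
          norm_num
        rw [← e, mul_comm] at hAc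
        exact le_of_mul_le_mul_left hAc (by positivity)
      exact_mod_cast this
    have hgA : ∀ z, z ∉ A → g n z = 0 := fun z hz => by
      have h1 := hA z hz
      simp only [g]
      rw [min_eq_left h1, min_eq_left (h1.trans (hc (Nat.le_succ n))), sub_self]
    refine (mul_le_mul' le_rfl (hFK n (g n) A hgA hcard)).trans ?_
    rw [← mul_assoc, ← ENNReal.ofReal_mul (by positivity)]
    refine mul_le_mul' (ENNReal.ofReal_le_ofReal ?_) le_rfl
    have eM : mass2 u ^ ((p - 1) / 2) = S ^ (p - 1) := by
      rw [← hSS, ← Real.rpow_natCast, ← Real.rpow_mul hS0.le]; congr 1; push_cast; ring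
    rw [eM, Real.mul_rpow hS0.le (by positivity)]
    have hone : ((1 / 2 : ℝ) ^ n) ^ (p - 1) * ((4 : ℝ) ^ n) ^ (2 * (a * b / (a + b))) ≤ 1 := by
      have e1 : ((1 / 2 : ℝ) ^ n) = ((2 : ℝ) ^ n)⁻¹ := by simp
      have e2 : ((4 : ℝ) ^ n) = ((2 : ℝ) ^ n) ^ (2 : ℝ) := by
        rw [show (2 : ℝ) = ((2 : ℕ) : ℝ) by norm_num, Real.rpow_natCast, ← pow_mul, mul_comm, pow_mul]
        norm_num
      rw [e1, e2, ← Real.rpow_mul (by positivity), Real.inv_rpow (by positivity),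
        ← Real.rpow_neg (by positivity), ← Real.rpow_add (by positivity)]
      apply Real.rpow_le_one_of_one_le_of_nonpos (one_le_pow₀ (by norm_num))
      have : 4 * a * b / (a + b) = 2 * (2 * (a * b / (a + b))) := by ring
      linarith
    calc _ = 16 * K * S ^ (p - 1) * (((1 / 2 : ℝ) ^ n) ^ (p - 1) * ((4 : ℝ) ^ n) ^ (2 * (a * b / (a + b)))) := by ring
      _ ≤ _ := mul_le_of_le_one_right (by positivity) hone
  calc _ ≤ ∑' z, ∑' n : ℕ, ENNReal.ofReal (16 * (S * (1 / 2) ^ n) ^ (p - 1)) * ENNReal.ofReal (g n z ^ 2) :=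
        ENNReal.tsum_le_tsum hpt
    _ = ∑' n : ℕ, ENNReal.ofReal (16 * (S * (1 / 2) ^ n) ^ (p - 1)) * ∑' z, ENNReal.ofReal (g n z ^ 2) := by
        rw [ENNReal.tsum_comm]
        simp_rw [ENNReal.tsum_mul_left]
    _ ≤ _ := ENNReal.tsum_le_tsum hn
    _ = ENNReal.ofReal (16 * K * mass2 u ^ ((p - 1) / 2)) *
        (∑' n, Edir J1 (g n) (1, 0) + ∑' n, Edir J2 (g n) (0, 1)) := by
        rw [ENNReal.tsum_mul_left, ENNReal.tsum_add]
    _ ≤ _ := mul_le_mul' le_rfl (add_le_add (Edir_trunc J1 u _ c hc) (Edir_trunc J2 u _ c hc))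

lemma Wd_le_mass (u : ℤ × ℤ → ℂ) (v : ℤ × ℤ) :
    Wd u v ≤ 4 * ∑' z, ENNReal.ofReal (‖u z‖ ^ 2) := by
  have h1 : ∑' z, ENNReal.ofReal (‖u (z + v)‖ ^ 2) = ∑' z, ENNReal.ofReal (‖u z‖ ^ 2) :=
    (Equiv.addRight v).tsum_eq (fun z => ENNReal.ofReal (‖u z‖ ^ 2))
  calc Wd u v ≤ ∑' z, (2 * ENNReal.ofReal (‖u z‖ ^ 2) + 2 * ENNReal.ofReal (‖u (z + v)‖ ^ 2)) := by
        refine ENNReal.tsum_le_tsum fun z => ?_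
        rw [show (2 : ℝ≥0∞) = ENNReal.ofReal 2 by simp, ← ENNReal.ofReal_mul (by norm_num),
          ← ENNReal.ofReal_mul (by norm_num), ← ENNReal.ofReal_add (by positivity) (by positivity)]
        apply ENNReal.ofReal_le_ofReal
        have := norm_sub_le (u z) (u (z + v))
        nlinarith [sq_nonneg (‖u z‖ - ‖u (z + v)‖), norm_nonneg (u z - u (z + v))]
    _ = _ := by
        rw [ENNReal.tsum_add, ENNReal.tsum_mul_left, ENNReal.tsum_mul_left, h1]
        ring

lemma Q_bound (J : ℕ → ℝ) (hpos : ∀ k, 0 ≤ J k) (hsum : Summable fun k : ℕ => J (k + 1))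
    (u : ℤ × ℤ → ℂ) (hu : MemL2two u) :
    Edir J u (1, 0) ≤ ENNReal.ofReal (∑' m : ℤ, ∑' n : ℤ, ∑' n' : ℤ,
      if n' = n then 0 else J (n - n').natAbs * ‖u (n, m) - u (n', m)‖ ^ 2) := by
  let r : ℤ → ℤ → ℤ → ℝ := fun m n n' =>
    if n' = n then 0 else J (n - n').natAbs * ‖u (n, m) - u (n', m)‖ ^ 2
  have hr : ∀ m n n', 0 ≤ r m n n' := fun m n n' => by
    simp only [r]; split_ifs
    · exact le_rfl
    · exact mul_nonneg (hpos _) (by positivity)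
  let Jt : ℤ → ℝ := fun d => if d = 0 then 0 else J d.natAbs
  have hJt : Summable Jt := by
    have h0 : Summable (fun n : ℕ => if n = 0 then 0 else J n) := by
      rw [← summable_nat_add_iff 1]
      simpa using hsum
    apply Summable.of_nat_of_neg
    · refine h0.congr fun n => by simp [Jt]
    · refine h0.congr fun n => by simp [Jt]
  have hJt0 : ∀ d, 0 ≤ Jt d := fun d => by simp only [Jt]; split_ifs; exacts [le_rfl, hpos _]
  have hQ : ∑' m, ∑' n, ∑' n', ENNReal.ofReal (r m n n') =
      ∑' d : ℤ, ENNReal.ofReal (Jt d) * Wd u (d, 0) := by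
    have e1 : ∀ m n, ∑' n', ENNReal.ofReal (r m n n') = ∑' d, ENNReal.ofReal (r m n (n + d)) := fun m n =>
      ((Equiv.addLeft n).tsum_eq (fun n' => ENNReal.ofReal (r m n n'))).symm
    simp_rw [e1]
    have e2 : ∀ m, ∑' n, ∑' d, ENNReal.ofReal (r m n (n + d)) = ∑' d, ∑' n, ENNReal.ofReal (r m n (n + d)) :=
      fun m => ENNReal.tsum_comm
    simp_rw [e2]
    rw [ENNReal.tsum_comm]
    refine tsum_congr fun d => ?_
    unfold Wd
    rw [← ENNReal.tsum_mul_left, ENNReal.tsum_comm, ENNReal.tsum_prod']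
    refine tsum_congr fun n => tsum_congr fun m => ?_
    rw [← ENNReal.ofReal_mul (hJt0 d)]
    simp [r, Jt]
  have hQt : ∑' m, ∑' n, ∑' n', ENNReal.ofReal (r m n n') ≠ ⊤ := by
    rw [hQ]
    refine ne_top_of_le_ne_top ?_ (ENNReal.tsum_le_tsum fun d => mul_le_mul' le_rfl (Wd_le_mass u (d, 0)))
    rw [ENNReal.tsum_mul_right]
    refine ENNReal.mul_ne_top hJt.tsum_ofReal_ne_top (ENNReal.mul_ne_top (by simp) ?_)
    exact Summable.tsum_ofReal_ne_top hu
  have hreal : ∑' m, ∑' n, ∑' n', r m n n' = (∑' m, ∑' n, ∑' n', ENNReal.ofReal (r m n n')).toReal := by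
    have f1 := ENNReal.ne_top_of_tsum_ne_top hQt
    rw [ENNReal.tsum_toReal_eq f1]
    refine tsum_congr fun m => ?_
    have f2 := ENNReal.ne_top_of_tsum_ne_top (f1 m)
    rw [ENNReal.tsum_toReal_eq f2]
    refine tsum_congr fun n => ?_
    rw [ENNReal.tsum_toReal_eq (fun _ => ENNReal.ofReal_ne_top)]
    refine tsum_congr fun n' => ?_
    rw [ENNReal.toReal_ofReal (hr _ _ _)]
  change _ ≤ ENNReal.ofReal (∑' m, ∑' n, ∑' n', r m n n')
  rw [hreal, ENNReal.ofReal_toReal hQt, hQ]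
  have hinj : Function.Injective (fun i : ℕ => ((i + 1 : ℕ) : ℤ)) := fun i j h => by simpa using h
  refine le_trans (le_of_eq ?_) (ENNReal.tsum_comp_le_tsum_of_injective hinj _)
  unfold Edir
  refine tsum_congr fun i => ?_
  have e : ((i + 1) • ((1, 0) : ℤ × ℤ)) = (((i + 1 : ℕ) : ℤ), 0) := by ext <;> simp
  have e' : Jt ((i + 1 : ℕ) : ℤ) = J (i + 1) := by
    simp only [Jt]
    rw [if_neg (by omega), Int.natAbs_natCast]
  simp only [e, e']

lemma Edir_swap (J : ℕ → ℝ) (u : ℤ × ℤ → ℂ) :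
    Edir J u (0, 1) = Edir J (fun z => u z.swap) (1, 0) := by
  unfold Edir Wd
  refine tsum_congr fun i => ?_
  congr 1
  rw [← (Equiv.prodComm ℤ ℤ).tsum_eq]
  refine tsum_congr fun z => ?_
  congr 4

lemma Q_nonneg (J : ℕ → ℝ) (hpos : ∀ k, 0 ≤ J k) (u : ℤ × ℤ → ℂ) :
    0 ≤ ∑' m : ℤ, ∑' n : ℤ, ∑' n' : ℤ,
      if n' = n then 0 else J (n - n').natAbs * ‖u (n, m) - u (n', m)‖ ^ 2 := by
  refine tsum_nonneg fun m => tsum_nonneg fun n => tsum_nonneg fun n' => ?_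
  split_ifs
  · exact le_rfl
  · exact mul_nonneg (hpos _) (by positivity)

lemma pairing_bound (J1 J2 : ℕ → ℝ) (hpos1 : ∀ k, 0 ≤ J1 k) (hpos2 : ∀ k, 0 ≤ J2 k)
    (hsum1 : Summable fun k : ℕ => J1 (k + 1)) (hsum2 : Summable fun k : ℕ => J2 (k + 1))
    (u : ℤ × ℤ → ℂ) (hu : MemL2two u) :
    Edir J1 u (1, 0) + Edir J2 u (0, 1) ≤ ENNReal.ofReal (2 * pairing2 J1 J2 u) ∧
      0 ≤ pairing2 J1 J2 u := by
  have hu' : MemL2two (fun z => u z.swap) := (Equiv.prodComm ℤ ℤ).summable_iff.2 hu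
  have h1 := Q_bound J1 hpos1 hsum1 u hu
  have h2 := Q_bound J2 hpos2 hsum2 _ hu'
  rw [← Edir_swap] at h2
  have n1 := Q_nonneg J1 hpos1 u
  have n2 := Q_nonneg J2 hpos2 (fun z => u z.swap)
  refine ⟨(add_le_add h1 h2).trans ?_, ?_⟩
  · rw [← ENNReal.ofReal_add n1 n2]
    apply ENNReal.ofReal_le_ofReal
    apply le_of_eq
    simp only [pairing2, Prod.swap_prod_mk]
    ring
  · simp only [Prod.swap_prod_mk] at n2
    unfold pairing2
    positivity

lemma alphaPrime_mem (α : ℝ≥0∞) (h : 0 < α) : 0 < alphaPrime α ∧ alphaPrime α ≤ 1 := by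
  unfold alphaPrime
  split_ifs with h2
  · have ht : α ≠ ⊤ := (h2.trans (by simp)).ne
    have h3 : α.toReal < 2 := by
      have := (ENNReal.toReal_lt_toReal ht (by simp)).2 h2
      simpa using this
    have := ENNReal.toReal_pos h.ne' ht
    constructor <;> linarith
  · norm_num

theorem stmt14 (p : ℝ) (hp : 1 < p) (J1 J2 : ℕ → ℝ)
    (hJ1pos : ∀ k, 0 ≤ J1 k) (hJ2pos : ∀ k, 0 ≤ J2 k)
    (hJ1sum : Summable fun k : ℕ => J1 (k + 1)) (hJ2sum : Summable fun k : ℕ => J2 (k + 1))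
    (hJ11 : 0 < J1 1) (hJ21 : 0 < J2 1)
    (α₁ α₂ : ℝ≥0∞) (hα₁ : 0 < α₁) (hα₂ : 0 < α₂) (hαord : α₂ ≤ α₁)
    (horder1 : JOrder1 J1 α₁) (horder2 : JOrder1 J2 α₂)
    (hpsup : 1 + 4 * alphaPrime α₁ * alphaPrime α₂ / (alphaPrime α₁ + alphaPrime α₂) ≤ p) :
    0 < nuZero2 J1 J2 p ∧
      ∃ C : ℝ, 0 < C ∧ ∀ u : ℤ × ℤ → ℂ, MemL2two u →
        ppot2 p u ≤ C * (mass2 u) ^ ((p - 1) / 2) * pairing2 J1 J2 u := by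
  have hex : ∃ C : ℝ, 0 < C ∧ ∀ u : ℤ × ℤ → ℂ, MemL2two u →
        ppot2 p u ≤ C * (mass2 u) ^ ((p - 1) / 2) * pairing2 J1 J2 u := by
    obtain ⟨ha, ha1⟩ := alphaPrime_mem α₁ hα₁
    obtain ⟨hb, hb1⟩ := alphaPrime_mem α₂ hα₂
    obtain ⟨C1, hC1, h1⟩ := star J1 hJ1pos hJ11 α₁ horder1
    obtain ⟨C2, hC2, h2⟩ := star J2 hJ2pos hJ21 α₂ horder2
    have hK : 0 < 16384 * (C1 + C2) := by positivity
    refine ⟨16 * (16384 * (C1 + C2)) * 2, by positivity, fun u hu => ?_⟩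
    obtain ⟨hP, hP0⟩ := pairing_bound J1 J2 hJ1pos hJ2pos hJ1sum hJ2sum u hu
    have hM0 : 0 ≤ mass2 u := tsum_nonneg fun _ => by positivity
    rcases eq_or_lt_of_le hM0 with hM | hM
    · have hz : ∀ z, ‖u z‖ = 0 := fun z => by
        have : ‖u z‖ ^ 2 ≤ mass2 u := hu.le_tsum z (fun _ _ => by positivity)
        rw [← hM] at this
        exact pow_eq_zero_iff (two_ne_zero) |>.1 (le_antisymm this (by positivity))
      have : ppot2 p u = 0 := by
        unfold ppot2
        simp only [hz, Real.zero_rpow (show p + 1 ≠ 0 by linarith), tsum_zero]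
      rw [this]
      positivity
    · have hmain := main_ineq p hp J1 J2 _ _ _ hK ha hb hpsup
        (fun k g A hA hcard => FK J1 J2 _ _ C1 C2 ha hb ha1 hb1 hC1 hC2 h1 h2 k g A hA hcard) u hu hM
      have h3 := hmain.trans (mul_le_mul' le_rfl hP)
      rw [← ENNReal.ofReal_mul (by positivity)] at h3
      have h4 := ENNReal.toReal_mono ENNReal.ofReal_ne_top h3
      rw [ENNReal.toReal_ofReal (by positivity), ENNReal.tsum_toReal_eq (fun _ => ENNReal.ofReal_ne_top)] at h4
      calc ppot2 p u = ∑' z, (ENNReal.ofReal (‖u z‖ ^ (p + 1))).toReal := by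
            unfold ppot2
            refine tsum_congr fun z => ?_
            rw [ENNReal.toReal_ofReal (by positivity)]
        _ ≤ _ := h4
        _ = _ := by ring
  refine ⟨?_, hex⟩
  obtain ⟨C, hC, hGN⟩ := hex
  have hbdd : BddAbove (insert 0 {ν : ℝ | 0 < ν ∧ GNineq2 J1 J2 p ν}) := by
    rw [bddAbove_insert]
    let δ : ℤ × ℤ → ℂ := fun z => if z = 0 then 1 else 0
    have hδ : MemL2two δ := by
      refine summable_of_ne_finset_zero (s := {0}) fun z hz => ?_
      simp [δ, Finset.notMem_singleton.1 hz]
    have hm : mass2 δ = 1 := by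
      unfold mass2
      rw [tsum_eq_single 0 (fun z hz => by simp [δ, hz])]
      simp [δ]
    have hq : ppot2 p δ = 1 := by
      unfold ppot2
      rw [tsum_eq_single 0 (fun z hz => by simp [δ, hz, Real.zero_rpow (show p + 1 ≠ 0 by linarith)])]
      simp [δ]
    refine ⟨((p + 1) / 2 * pairing2 J1 J2 δ) ^ (2 / (p - 1)), fun ν hν => ?_⟩
    obtain ⟨hν0, hν1⟩ := hν
    have h := hν1 δ hδ
    rw [hm, hq, Real.one_rpow, mul_one, neg_div, Real.rpow_neg hν0.le] at h
    have hpow : 0 < ν ^ ((p - 1) / 2) := by positivity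
    have h' : ν ^ ((p - 1) / 2) ≤ (p + 1) / 2 * pairing2 J1 J2 δ := by
      calc ν ^ ((p - 1) / 2) = ν ^ ((p - 1) / 2) * 1 := (mul_one _).symm
        _ ≤ ν ^ ((p - 1) / 2) * ((p + 1) / 2 * (ν ^ ((p - 1) / 2))⁻¹ * pairing2 J1 J2 δ) := by gcongr
        _ = _ := by field_simp
    have hp1 : p - 1 ≠ 0 := by linarith
    calc ν = (ν ^ ((p - 1) / 2)) ^ (2 / (p - 1)) := by
          rw [← Real.rpow_mul hν0.le, show (p - 1) / 2 * (2 / (p - 1)) = 1 by field_simp, Real.rpow_one]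
      _ ≤ _ := Real.rpow_le_rpow hpow.le h' (div_nonneg (by norm_num) (by linarith))
  have hB : 0 < 2 * C / (p + 1) := div_pos (by linarith) (by linarith)
  set ν := (2 * C / (p + 1)) ^ (-(2 / (p - 1))) with hν
  have hν0 : 0 < ν := Real.rpow_pos_of_pos hB _
  have hp1 : p - 1 ≠ 0 := by linarith
  have hνp : ν ^ (-(p - 1) / 2) = 2 * C / (p + 1) := by
    rw [hν, ← Real.rpow_mul hB.le, show -(2 / (p - 1)) * (-(p - 1) / 2) = 1 by field_simp, Real.rpow_one]
  refine lt_of_lt_of_le hν0 (le_csSup hbdd (Set.mem_insert_of_mem _ ⟨hν0, fun q hq => ?_⟩))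
  rw [hνp]
  refine (hGN q hq).trans (le_of_eq ?_)
  have : p + 1 ≠ 0 := by linarith
  field_simp
end
end
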